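/- There exist constants c ∈ (0,1), N > 0 and C > 0 such that for all ν > N, every positive integer k, every j that is the k-th positive zero of J_ν with j < (1+c)ν, and every x* ≥ ν satisfying x*·g(ν/x*) = k − 1/4, one has | j − x* | ≤ C · ν^{1/3} · k^{−4/3}. -/

import Mathlib

open Real MeasureTheory Set

/-- The Bessel function of the first kind of order `ν ≥ 0`, for `x > 0`, via the
integral representation. -/
noncomputable def besselJ (ν x : ℝ) : ℝ :=
  (1 / π) * (∫ θ in (0:ℝ)..π, Real.cos (x * Real.sin θ - ν * θ)) -
    (Real.sin (ν * π) / π) * ∫ t in Set.Ioi (0:ℝ), Real.exp (-x * Real.sinh t - ν * t)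

/-- The function `g(t) = (√(1-t²) - t arccos t)/π`. -/
noncomputable def gfun (t : ℝ) : ℝ := (Real.sqrt (1 - t ^ 2) - t * Real.arccos t) / π

/-- `j` is the `k`-th positive zero of `J_ν`: `j > 0`, `J_ν(j) = 0`, and there are exactly
`k - 1` zeros of `J_ν` in `(0, j)`. -/
def IsKthZero (ν : ℝ) (k : ℕ) (j : ℝ) : Prop :=
  0 < j ∧ besselJ ν j = 0 ∧ {x : ℝ | 0 < x ∧ x < j ∧ besselJ ν x = 0}.ncard = k - 1

/-!
In the variable `log x`, Bessel's equation is an oscillator with squared frequency `x² - ν²`. Below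
the turning point `x = ν`, and slightly beyond it, a bounded solution has no zeros. Past it, with
`r = √(x² - ν²)`, the vector `(r y, x y' + κ y)` rotates with an angle `Φ` satisfying
`Φ' = r / x + (error)`. The leading term integrates to the Debye phase `ϑ(x) = π x g(ν / x)`, and
the error is nonnegative with integral at most `1 / (4 r) + 5 ν² / (12 r³)` over `(x, ∞)`. Hankel's
asymptotics fix `Φ = ϑ + π / 4 + o(1)` at infinity. Since `Φ ∈ (0, π)` at the start of the
oscillatory region, the `k`-th zero `j` is where `Φ = k π`, that is,
`ϑ(j) = (k - 1/4) π + O(ν² / r³)`. As `ϑ' = r / x` and `r³ ≥ k ν²`, inverting `ϑ` turns this into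
`j - x* = O(ν³ / r⁴) = O(ν^{1/3} k^{-4/3})`.
-/

open Filter Topology

/-! ### Bessel's equation from the integral representation -/

/-- The `n`-th derivative in `x` of `∫₀^π cos (x sin θ - ν θ) dθ`; each differentiation brings down
a factor `sin θ` and advances the phase by `π / 2`. -/
noncomputable def besselCosMoment (n : ℕ) (ν x : ℝ) : ℝ :=
  ∫ θ in (0 : ℝ)..π, sin θ ^ n * cos (x * sin θ - ν * θ + n * (π / 2))

/-- Up to the sign `(-1) ^ n`, the `n`-th derivative in `x` of `∫₀^∞ e^{-x sinh t - ν t} dt`. -/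
noncomputable def besselExpMoment (n : ℕ) (ν x : ℝ) : ℝ :=
  ∫ t in Ioi (0 : ℝ), sinh t ^ n * exp (-x * sinh t - ν * t)

theorem besselJ_eq_moments (ν x : ℝ) :
    besselJ ν x =
      1 / π * besselCosMoment 0 ν x - sin (ν * π) / π * besselExpMoment 0 ν x := by
  simp [besselJ, besselCosMoment, besselExpMoment]

theorem hasDerivAt_besselCosMoment (n : ℕ) (ν x : ℝ) :
    HasDerivAt (besselCosMoment n ν) (besselCosMoment (n + 1) ν x) x := by
  refine (intervalIntegral.hasDerivAt_integral_of_dominated_loc_of_deriv_le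
    (F := fun x θ => sin θ ^ n * cos (x * sin θ - ν * θ + n * (π / 2)))
    (F' := fun x θ => sin θ ^ (n + 1) * cos (x * sin θ - ν * θ + (n + 1 : ℕ) * (π / 2)))
    (bound := fun _ => 1) (s := univ) univ_mem ?_ ?_ ?_ ?_ ?_ ?_).2
  · exact Eventually.of_forall fun x => (by fun_prop : Continuous _).aestronglyMeasurable
  · exact (by fun_prop : Continuous _).intervalIntegrable _ _
  · exact (by fun_prop : Continuous _).aestronglyMeasurable
  · refine Eventually.of_forall fun θ _ x _ => ?_
    rw [norm_mul, norm_pow]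
    exact mul_le_one₀ (pow_le_one₀ (norm_nonneg _) (abs_sin_le_one _)) (norm_nonneg _)
      (abs_cos_le_one _)
  · exact intervalIntegrable_const
  · refine Eventually.of_forall fun θ _ x _ => ?_
    have hphase : HasDerivAt (fun x => x * sin θ - ν * θ + n * (π / 2)) (sin θ) x := by
      simpa using (((hasDerivAt_id x).mul_const (sin θ)).sub_const (ν * θ)).add_const (n * (π / 2))
    refine (hphase.cos.const_mul (sin θ ^ n)).congr_deriv ?_
    rw [Nat.cast_succ, add_one_mul, ← add_assoc, cos_add_pi_div_two]
    ring

theorem besselCosMoment_ode (ν x : ℝ) :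
    x ^ 2 * besselCosMoment 2 ν x + x * besselCosMoment 1 ν x
      + (x ^ 2 - ν ^ 2) * besselCosMoment 0 ν x = (x - ν) * sin (ν * π) := by
  have hderiv (θ : ℝ) : HasDerivAt (fun θ => (x * cos θ + ν) * sin (x * sin θ - ν * θ))
      (x ^ 2 * (sin θ ^ 2 * cos (x * sin θ - ν * θ + (2 : ℕ) * (π / 2)))
        + x * (sin θ ^ 1 * cos (x * sin θ - ν * θ + (1 : ℕ) * (π / 2)))
        + (x ^ 2 - ν ^ 2) * (sin θ ^ 0 * cos (x * sin θ - ν * θ + (0 : ℕ) * (π / 2)))) θ := by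
    have hphase : HasDerivAt (fun θ => x * sin θ - ν * θ) (x * cos θ - ν) θ := by
      simpa using ((hasDerivAt_sin θ).const_mul x).fun_sub ((hasDerivAt_id θ).const_mul ν)
    have hfactor : HasDerivAt (fun θ => x * cos θ + ν) (x * -sin θ) θ :=
      ((hasDerivAt_cos θ).const_mul x).add_const ν
    refine (hfactor.mul hphase.sin).congr_deriv ?_
    have hpi : ((2 : ℕ) : ℝ) * (π / 2) = π := by push_cast; ring
    rw [hpi, cos_add_pi, Nat.cast_one, one_mul, cos_add_pi_div_two, Nat.cast_zero, zero_mul,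
      add_zero, sin_sq]
    ring
  have hftc := intervalIntegral.integral_eq_sub_of_hasDerivAt (a := 0) (b := π)
    (fun θ _ => hderiv θ) ((by fun_prop : Continuous _).intervalIntegrable _ _)
  rw [intervalIntegral.integral_add, intervalIntegral.integral_add,
    intervalIntegral.integral_const_mul, intervalIntegral.integral_const_mul,
    intervalIntegral.integral_const_mul] at hftc
  · simp only [besselCosMoment]
    rw [hftc]
    simp only [sin_pi, cos_pi, sin_zero, mul_zero, zero_sub, sub_zero, sin_neg]
    ring
  all_goals exact (by fun_prop : Continuous _).intervalIntegrable _ _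

theorem pow_mul_exp_neg_mul_le (n : ℕ) {x s : ℝ} (hx : 0 < x) (hs : 0 ≤ s) :
    s ^ n * exp (-x * s) ≤ n.factorial / x ^ n := by
  have h := pow_div_factorial_le_exp (x * s) (by positivity) n
  rw [div_le_iff₀ (by positivity), mul_pow] at h
  rw [neg_mul, exp_neg, le_div_iff₀ (by positivity), ← div_eq_mul_inv, div_mul_eq_mul_div,
    div_le_iff₀ (exp_pos _)]
  linarith

theorem integrableOn_sinh_pow_mul_exp (n : ℕ) {ν x : ℝ} (hν : 0 < ν) (hx : 0 < x) :
    IntegrableOn (fun t => sinh t ^ n * exp (-x * sinh t - ν * t)) (Ioi 0) := by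
  refine ((exp_neg_integrableOn_Ioi 0 hν).const_mul (n.factorial / x ^ n)).mono'
    (by fun_prop : Continuous _).aestronglyMeasurable ?_
  refine (ae_restrict_iff' measurableSet_Ioi).2 (Eventually.of_forall fun t ht => ?_)
  have hs : 0 ≤ sinh t := sinh_nonneg_iff.2 (le_of_lt ht)
  rw [norm_of_nonneg (by positivity), sub_eq_add_neg, exp_add, ← mul_assoc, ← neg_mul]
  exact mul_le_mul_of_nonneg_right (pow_mul_exp_neg_mul_le n hx hs) (exp_pos _).le

theorem hasDerivAt_besselExpMoment (n : ℕ) {ν x : ℝ} (hν : 0 < ν) (hx : 0 < x) :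
    HasDerivAt (besselExpMoment n ν) (-besselExpMoment (n + 1) ν x) x := by
  rw [besselExpMoment, ← integral_neg]
  refine (hasDerivAt_integral_of_dominated_loc_of_deriv_le
    (F := fun x t => sinh t ^ n * exp (-x * sinh t - ν * t))
    (F' := fun x t => -(sinh t ^ (n + 1) * exp (-x * sinh t - ν * t)))
    (bound := fun t => sinh t ^ (n + 1) * exp (-(x / 2) * sinh t - ν * t))
    (s := Ioi (x / 2)) (Ioi_mem_nhds (by linarith)) ?_ ?_ ?_ ?_ ?_ ?_).2
  · exact Eventually.of_forall fun x => (by fun_prop : Continuous _).aestronglyMeasurable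
  · exact integrableOn_sinh_pow_mul_exp n hν hx
  · exact (by fun_prop : Continuous _).aestronglyMeasurable
  · refine (ae_restrict_iff' measurableSet_Ioi).2 (Eventually.of_forall fun t ht y hy => ?_)
    have hs : 0 ≤ sinh t := sinh_nonneg_iff.2 (le_of_lt ht)
    rw [norm_neg, norm_of_nonneg (by positivity)]
    have : -y * sinh t ≤ -(x / 2) * sinh t :=
      mul_le_mul_of_nonneg_right (neg_le_neg (le_of_lt hy)) hs
    gcongr
  · exact integrableOn_sinh_pow_mul_exp (n + 1) hν (by linarith)
  · refine Eventually.of_forall fun t y _ => ?_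
    have hphase : HasDerivAt (fun y => -y * sinh t - ν * t) (-sinh t) y := by
      simpa using ((hasDerivAt_id y).neg.mul_const (sinh t)).sub_const (ν * t)
    exact (hphase.exp.const_mul (sinh t ^ n)).congr_deriv (by ring)

theorem integrableOn_cosh_mul_exp {ν x : ℝ} (hν : 0 < ν) (hx : 0 < x) :
    IntegrableOn (fun t => -(x * cosh t - ν) * exp (-x * sinh t - ν * t)) (Ioi 0) := by
  have hmaj := ((integrableOn_sinh_pow_mul_exp 1 hν hx).const_mul x).add
    ((integrableOn_sinh_pow_mul_exp 0 hν hx).const_mul (x + ν))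
  refine hmaj.mono' (by fun_prop : Continuous _).aestronglyMeasurable ?_
  refine (ae_restrict_iff' measurableSet_Ioi).2 (Eventually.of_forall fun t ht => ?_)
  have hcosh : cosh t ≤ sinh t + 1 := by
    have := exp_le_one_iff.2 (neg_nonpos.2 (le_of_lt ht : 0 ≤ t))
    linarith [cosh_sub_sinh t]
  have hfactor : |-(x * cosh t - ν)| ≤ x * sinh t + (x + ν) := by
    rw [abs_neg, abs_le]
    constructor <;> nlinarith [cosh_pos t, sinh_pos_iff.2 ht]
  rw [norm_mul, norm_of_nonneg (exp_pos _).le, norm_eq_abs]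
  refine (mul_le_mul_of_nonneg_right hfactor (exp_pos _).le).trans_eq ?_
  simp only [Pi.add_apply]
  ring

theorem besselExpMoment_ode {ν x : ℝ} (hν : 0 < ν) (hx : 0 < x) :
    x ^ 2 * besselExpMoment 2 ν x - x * besselExpMoment 1 ν x
      + (x ^ 2 - ν ^ 2) * besselExpMoment 0 ν x = x - ν := by
  have hderiv (t : ℝ) : HasDerivAt (fun t => -(x * cosh t - ν) * exp (-x * sinh t - ν * t))
      (x ^ 2 * (sinh t ^ 2 * exp (-x * sinh t - ν * t))
        - x * (sinh t ^ 1 * exp (-x * sinh t - ν * t))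
        + (x ^ 2 - ν ^ 2) * (sinh t ^ 0 * exp (-x * sinh t - ν * t))) t := by
    have hphase : HasDerivAt (fun t => -x * sinh t - ν * t) (-x * cosh t - ν) t := by
      simpa using ((hasDerivAt_sinh t).const_mul (-x)).fun_sub ((hasDerivAt_id t).const_mul ν)
    have hfactor : HasDerivAt (fun t => -(x * cosh t - ν)) (-(x * sinh t)) t :=
      (((hasDerivAt_cosh t).const_mul x).sub_const ν).neg
    refine (hfactor.mul hphase.exp).congr_deriv ?_
    rw [sinh_sq]
    ring
  have i₂ := (integrableOn_sinh_pow_mul_exp 2 hν hx).const_mul (x ^ 2)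
  have i₁ := (integrableOn_sinh_pow_mul_exp 1 hν hx).const_mul x
  have i₀ := (integrableOn_sinh_pow_mul_exp 0 hν hx).const_mul (x ^ 2 - ν ^ 2)
  have hlim := tendsto_zero_of_hasDerivAt_of_integrableOn_Ioi (fun t _ => hderiv t)
    ((i₂.sub i₁).add i₀) (integrableOn_cosh_mul_exp hν hx)
  have hftc := integral_Ioi_of_hasDerivAt_of_tendsto (a := 0)
    (hderiv 0).continuousAt.continuousWithinAt (fun t _ => hderiv t) ((i₂.sub i₁).add i₀) hlim
  have hadd := integral_add (i₂.sub i₁) i₀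
  have hsub := integral_sub i₂ i₁
  simp only [Pi.sub_apply] at hadd
  rw [hadd, hsub, integral_const_mul, integral_const_mul, integral_const_mul] at hftc
  simp only [cosh_zero, sinh_zero, mul_zero, sub_zero, exp_zero] at hftc
  simp only [besselExpMoment]
  linarith

/-- `x J_ν'(x)`, the second component of Bessel's equation written as a first-order system. -/
noncomputable def besselJSlope (ν x : ℝ) : ℝ :=
  x * (1 / π * besselCosMoment 1 ν x + sin (ν * π) / π * besselExpMoment 1 ν x)

/-- Bessel's equation `x (x y')' + (x² - ν²) y = 0` on `(0, ∞)`, as a first-order system in `y` and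
`z = x y'`. -/
structure BesselSystem (ν : ℝ) (y z : ℝ → ℝ) : Prop where
  hasDerivAt_fst : ∀ {x : ℝ}, 0 < x → HasDerivAt y (z x / x) x
  hasDerivAt_snd : ∀ {x : ℝ}, 0 < x → HasDerivAt z (-((x ^ 2 - ν ^ 2) * y x) / x) x

theorem besselSystem_besselJ {ν : ℝ} (hν : 0 < ν) :
    BesselSystem ν (besselJ ν) (besselJSlope ν) where
  hasDerivAt_fst {x} hx := by
    have h := ((hasDerivAt_besselCosMoment 0 ν x).const_mul (1 / π)).fun_sub
      ((hasDerivAt_besselExpMoment 0 hν hx).const_mul (sin (ν * π) / π))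
    rw [funext (besselJ_eq_moments ν), besselJSlope, mul_div_cancel_left₀ _ hx.ne']
    exact h.congr_deriv (by ring)
  hasDerivAt_snd {x} hx := by
    have h := (hasDerivAt_id x).fun_mul
      (((hasDerivAt_besselCosMoment 1 ν x).const_mul (1 / π)).fun_add
        ((hasDerivAt_besselExpMoment 1 hν hx).const_mul (sin (ν * π) / π)))
    refine h.congr_deriv ?_
    rw [eq_div_iff hx.ne', besselJ_eq_moments, id]
    linear_combination
      1 / π * besselCosMoment_ode ν x - sin (ν * π) / π * besselExpMoment_ode hν hx

theorem besselExpMoment_nonneg (n : ℕ) (ν x : ℝ) : 0 ≤ besselExpMoment n ν x :=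
  setIntegral_nonneg measurableSet_Ioi fun t ht => by
    have := sinh_pos_iff.2 ht
    positivity

theorem besselExpMoment_zero_le {ν x : ℝ} (hν : 0 < ν) (hx : 0 < x) :
    besselExpMoment 0 ν x ≤ 1 / ν := by
  have hexp : ∫ t in Ioi (0 : ℝ), exp (-ν * t) = 1 / ν := by
    rw [integral_exp_mul_Ioi (neg_neg_of_pos hν)]
    simp
  rw [← hexp]
  refine setIntegral_mono_on (integrableOn_sinh_pow_mul_exp 0 hν hx)
    (exp_neg_integrableOn_Ioi 0 hν) measurableSet_Ioi fun t ht => ?_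
  have := mul_pos hx (sinh_pos_iff.2 ht)
  rw [pow_zero, one_mul]
  exact exp_le_exp.2 (by linarith)

theorem abs_besselCosMoment_le (n : ℕ) (ν x : ℝ) : |besselCosMoment n ν x| ≤ π := by
  have h := intervalIntegral.norm_integral_le_of_norm_le_const (a := 0) (b := π) (C := 1)
    (f := fun θ => sin θ ^ n * cos (x * sin θ - ν * θ + n * (π / 2))) fun θ _ => by
      rw [norm_mul, norm_pow]
      exact mul_le_one₀ (pow_le_one₀ (norm_nonneg _) (abs_sin_le_one _)) (norm_nonneg _)
        (abs_cos_le_one _)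
  rwa [norm_eq_abs, one_mul, sub_zero, abs_of_pos pi_pos] at h

theorem abs_besselJ_le {ν x : ℝ} (hν : 0 < ν) (hx : 0 < x) :
    |besselJ ν x| ≤ 1 + 1 / (π * ν) := by
  have hcos : |1 / π * besselCosMoment 0 ν x| ≤ 1 := by
    rw [abs_mul, abs_of_pos (by positivity : 0 < 1 / π), one_div_mul_eq_div,
      div_le_one pi_pos]
    exact abs_besselCosMoment_le 0 ν x
  have hexp : |sin (ν * π) / π * besselExpMoment 0 ν x| ≤ 1 / (π * ν) := by
    rw [abs_mul, abs_div, abs_of_pos pi_pos, abs_of_nonneg (besselExpMoment_nonneg 0 ν x),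
      ← one_div_mul_one_div]
    gcongr
    exacts [besselExpMoment_nonneg 0 ν x, abs_sin_le_one _, besselExpMoment_zero_le hν hx]
  rw [besselJ_eq_moments]
  exact (abs_sub _ _).trans (add_le_add hcos hexp)

/-! ### Asymptotics at infinity -/

theorem tendsto_or_tendsto_neg_of_tendsto_sq {f : ℝ → ℂ} {c : ℂ} (hf : Continuous f) (hc : c ≠ 0)
    (h : Tendsto (fun s => f s ^ 2) atTop (𝓝 (c ^ 2))) :
    Tendsto f atTop (𝓝 c) ∨ Tendsto f atTop (𝓝 (-c)) := by
  have hratio : Tendsto (fun s => f s ^ 2 / c ^ 2) atTop (𝓝 1) := by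
    have := h.div_const (c ^ 2)
    rwa [div_self (pow_ne_zero 2 hc)] at this
  obtain ⟨s₀, hslit⟩ := eventually_atTop.1
    (hratio.eventually_mem (Complex.isOpen_slitPlane.mem_nhds Complex.one_mem_slitPlane))
  set root : ℝ → ℂ := fun s => c * (f s ^ 2 / c ^ 2) ^ (2⁻¹ : ℂ) with hroot
  have hroot_lim : Tendsto root atTop (𝓝 c) := by
    simpa using (hratio.cpow (tendsto_const_nhds (x := 2⁻¹)) Complex.one_mem_slitPlane).const_mul c
  have hroot_cont : ContinuousOn root (Ici s₀) :=
    continuousOn_const.mul (((hf.pow 2).div_const _).continuousOn.cpow_const hslit)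
  have hsq : EqOn (f ^ 2) (root ^ 2) (Ici s₀) := fun s _ => by
    have := Complex.cpow_nat_inv_pow (f s ^ 2 / c ^ 2) two_ne_zero
    push_cast at this
    rw [Pi.pow_apply, Pi.pow_apply, hroot, mul_pow, this, mul_div_cancel₀ _ (pow_ne_zero 2 hc)]
  have hroot_ne {s : ℝ} (hs : s ∈ Ici s₀) : root s ≠ 0 := fun h0 => by
    have hpow := (mul_eq_zero.1 h0).resolve_left hc
    exact Complex.slitPlane_ne_zero (hslit s hs) (Complex.cpow_eq_zero_iff _ _ |>.1 hpow).1
  rcases isPreconnected_Ici.eq_or_eq_neg_of_sq_eq hf.continuousOn hroot_cont hsq hroot_ne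
    with heq | heq
  · exact Or.inl (hroot_lim.congr' ((eventually_ge_atTop s₀).mono fun s hs => (heq hs).symm))
  · exact Or.inr (hroot_lim.neg.congr' ((eventually_ge_atTop s₀).mono fun s hs => (heq hs).symm))

/-- The complex Fresnel integral `∫₀ˢ e^{-iv²} dv`. -/
noncomputable def fresnelIntegral (s : ℝ) : ℂ :=
  ∫ v in (0 : ℝ)..s, Complex.exp ((-v ^ 2 : ℝ) * Complex.I)

/-- The auxiliary integral `∫₀¹ e^{-is²(1+t²)} / (1+t²) dt`, which measures how far
`(∫₀ˢ e^{-iv²} dv)²` is from its limit. -/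
noncomputable def fresnelDefect (s : ℝ) : ℂ :=
  ∫ t in (0 : ℝ)..1, Complex.exp ((-(s ^ 2 * (1 + t ^ 2)) : ℝ) * Complex.I) / (1 + t ^ 2 : ℝ)

theorem hasDerivAt_fresnelIntegral (s : ℝ) :
    HasDerivAt fresnelIntegral (Complex.exp ((-s ^ 2 : ℝ) * Complex.I)) s :=
  ((by fun_prop : Continuous _).integral_hasStrictDerivAt 0 s).hasDerivAt

theorem continuous_fresnelIntegral : Continuous fresnelIntegral :=
  continuous_iff_continuousAt.2 fun s => (hasDerivAt_fresnelIntegral s).continuousAt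

theorem hasDerivAt_cexp_mul_I {φ : ℝ → ℝ} {φ' t : ℝ} (hφ : HasDerivAt φ φ' t) :
    HasDerivAt (fun t => Complex.exp (φ t * Complex.I))
      (Complex.exp (φ t * Complex.I) * (φ' * Complex.I)) t :=
  (hφ.ofReal_comp.mul_const Complex.I).cexp

theorem integral_cexp_neg_sq_mul (s : ℝ) :
    s * ∫ t in (0 : ℝ)..1, Complex.exp ((-(s * t) ^ 2 : ℝ) * Complex.I) = fresnelIntegral s := by
  have h := intervalIntegral.smul_integral_comp_mul_left (a := 0) (b := 1)
    (fun v : ℝ => Complex.exp ((-v ^ 2 : ℝ) * Complex.I)) s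
  rwa [mul_zero, mul_one, Complex.real_smul] at h

theorem continuous_cexp_div_one_add_sq (s : ℝ) : Continuous fun t : ℝ =>
    Complex.exp ((-(s ^ 2 * (1 + t ^ 2)) : ℝ) * Complex.I) / (1 + t ^ 2 : ℝ) :=
  (by fun_prop : Continuous _).div₀ (by fun_prop) fun t =>
    Complex.ofReal_ne_zero.2 (by positivity)

theorem cexp_neg_sq_mul_one_add_sq (s t : ℝ) :
    Complex.exp ((-(s ^ 2 * (1 + t ^ 2)) : ℝ) * Complex.I)
      = Complex.exp ((-s ^ 2 : ℝ) * Complex.I) * Complex.exp ((-(s * t) ^ 2 : ℝ) * Complex.I) := by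
  rw [← Complex.exp_add]
  push_cast
  ring_nf

theorem hasDerivAt_fresnelDefect (s : ℝ) :
    HasDerivAt fresnelDefect
      (-2 * Complex.I * Complex.exp ((-s ^ 2 : ℝ) * Complex.I) * fresnelIntegral s) s := by
  have hparam := (intervalIntegral.hasDerivAt_integral_of_dominated_loc_of_deriv_le
    (μ := volume) (a := 0) (b := 1) (x₀ := s) (s := Metric.ball s 1)
    (F := fun s t : ℝ =>
      Complex.exp ((-(s ^ 2 * (1 + t ^ 2)) : ℝ) * Complex.I) / (1 + t ^ 2 : ℝ))
    (F' := fun s t : ℝ =>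
      -2 * Complex.I * Complex.exp ((-s ^ 2 : ℝ) * Complex.I) *
        (s * Complex.exp ((-(s * t) ^ 2 : ℝ) * Complex.I)))
    (bound := fun _ => 2 * (|s| + 1)) (Metric.ball_mem_nhds s one_pos)
    (Eventually.of_forall fun s => (continuous_cexp_div_one_add_sq s).aestronglyMeasurable)
    ((continuous_cexp_div_one_add_sq s).intervalIntegrable _ _)
    (by fun_prop : Continuous _).aestronglyMeasurable
    (Eventually.of_forall fun t _ x hx => ?_) intervalIntegrable_const
    (Eventually.of_forall fun t _ x _ => ?_)).2
  · rwa [intervalIntegral.integral_const_mul, intervalIntegral.integral_const_mul,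
      integral_cexp_neg_sq_mul] at hparam
  · have hx' : |x| ≤ |s| + 1 := by
      have := abs_sub_abs_le_abs_sub x s
      rw [Metric.mem_ball, Real.dist_eq] at hx
      linarith
    simpa [Complex.norm_exp_ofReal_mul_I, -Complex.ofReal_neg, -Complex.ofReal_pow] using hx'
  · have ht : (1 + t ^ 2 : ℂ) ≠ 0 := by exact_mod_cast (by positivity : (1 + t ^ 2 : ℝ) ≠ 0)
    have hphase : HasDerivAt (fun x => -(x ^ 2 * (1 + t ^ 2))) (-(2 * x * (1 + t ^ 2))) x := by
      simpa using (((hasDerivAt_id x).fun_pow 2).mul_const (1 + t ^ 2)).fun_neg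
    refine ((hasDerivAt_cexp_mul_I hphase).div_const _).congr_deriv ?_
    rw [cexp_neg_sq_mul_one_add_sq]
    push_cast
    field_simp

theorem fresnelIntegral_sq (s : ℝ) :
    fresnelIntegral s ^ 2 = -Complex.I * (π / 4 - fresnelDefect s) := by
  have hderiv (s : ℝ) : HasDerivAt
      (fun s => fresnelIntegral s ^ 2 - Complex.I * fresnelDefect s) 0 s := by
    refine (((hasDerivAt_fresnelIntegral s).pow 2).sub
      ((hasDerivAt_fresnelDefect s).const_mul Complex.I)).congr_deriv ?_
    linear_combination (2 * Complex.exp ((-s ^ 2 : ℝ) * Complex.I) * fresnelIntegral s) *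
      Complex.I_sq
  have hconst := is_const_of_deriv_eq_zero (fun s => (hderiv s).differentiableAt)
    (fun s => (hderiv s).deriv) s 0
  have hzero : fresnelDefect 0 = π / 4 := by
    have harctan := congrArg (fun r : ℝ => (r : ℂ)) (integral_one_div_one_add_sq (a := 0) (b := 1))
    rw [← intervalIntegral.integral_ofReal] at harctan
    simpa [fresnelDefect] using harctan
  simp only [hzero, fresnelIntegral, intervalIntegral.integral_same] at hconst
  rw [fresnelIntegral]
  linear_combination hconst

theorem norm_fresnelDefect_le (s : ℝ) : ‖fresnelDefect s‖ ≤ π / 4 := by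
  have hmono := intervalIntegral.norm_integral_le_of_norm_le (a := 0) (b := 1) zero_le_one
    (f := fun t : ℝ => Complex.exp ((-(s ^ 2 * (1 + t ^ 2)) : ℝ) * Complex.I) / (1 + t ^ 2 : ℝ))
    (g := fun t => 1 / (1 + t ^ 2)) (μ := volume)
    (Eventually.of_forall fun t _ => ?_)
    ((continuous_const.div₀ (by fun_prop) fun t => by positivity).intervalIntegrable _ _)
  · rwa [integral_one_div_one_add_sq, arctan_one, arctan_zero, sub_zero] at hmono
  · rw [norm_div, Complex.norm_exp_ofReal_mul_I, Complex.norm_of_nonneg (by positivity)]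

theorem norm_fresnelIntegral_le (s : ℝ) : ‖fresnelIntegral s‖ ≤ √(π / 2) := by
  refine le_sqrt_of_sq_le ?_
  rw [← norm_pow, fresnelIntegral_sq, norm_mul, norm_neg, Complex.norm_I, one_mul]
  refine (norm_sub_le _ _).trans ?_
  have hpi : ‖(π / 4 : ℂ)‖ = π / 4 := by
    rw [← Complex.ofReal_ofNat, ← Complex.ofReal_div, Complex.norm_of_nonneg (by positivity)]
  linarith [norm_fresnelDefect_le s]

theorem tendsto_integral_mul_deriv {ι : Type*} {l : Filter ι} [l.IsCountablyGenerated] {b K : ℝ}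
    {ℓ : ℂ} {g g' : ℝ → ℂ} {V V' : ι → ℝ → ℂ} (hb : 0 < b)
    (hg : ∀ t ∈ Icc 0 b, HasDerivAt g (g' t) t) (hg' : ContinuousOn g' (Icc 0 b))
    (hV : ∀ᶠ x in l, ∀ t ∈ Icc 0 b, HasDerivAt (V x) (V' x t) t)
    (hV' : ∀ᶠ x in l, ContinuousOn (V' x) (Icc 0 b))
    (hzero : ∀ᶠ x in l, V x 0 = 0) (hbound : ∀ᶠ x in l, ∀ t ∈ Icc 0 b, ‖V x t‖ ≤ K)
    (hlim : ∀ t ∈ Ioc 0 b, Tendsto (fun x => V x t) l (𝓝 ℓ)) :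
    Tendsto (fun x => ∫ t in (0 : ℝ)..b, g t * V' x t) l (𝓝 (g 0 * ℓ)) := by
  have huIcc : uIcc 0 b = Icc 0 b := uIcc_of_le hb.le
  have huIoc : uIoc 0 b ⊆ Icc 0 b := uIoc_of_le hb.le ▸ Ioc_subset_Icc_self
  have hint_g' : IntervalIntegrable g' volume 0 b := (huIcc ▸ hg').intervalIntegrable
  have hparts : ∀ᶠ x in l, g b * V x b - ∫ t in (0 : ℝ)..b, g' t * V x t
      = ∫ t in (0 : ℝ)..b, g t * V' x t := by
    filter_upwards [hV, hV', hzero] with x hx hx' hx0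
    rw [intervalIntegral.integral_mul_deriv_eq_deriv_mul (u := g) (v := V x) (huIcc ▸ hg)
      (huIcc ▸ hx) hint_g' (huIcc ▸ hx').intervalIntegrable, hx0, mul_zero, sub_zero]
  have hdom : Tendsto (fun x => ∫ t in (0 : ℝ)..b, g' t * V x t) l
      (𝓝 (∫ t in (0 : ℝ)..b, g' t * ℓ)) := by
    refine intervalIntegral.tendsto_integral_filter_of_dominated_convergence
      (fun t => ‖g' t‖ * K) ?_ ?_ (hint_g'.norm.mul_const K) ?_
    · filter_upwards [hV] with x hx
      have hVcont : ContinuousOn (V x) (Icc 0 b) := fun t ht =>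
        (hx t ht).continuousAt.continuousWithinAt
      exact ((hg'.mul hVcont).mono huIoc).aestronglyMeasurable measurableSet_uIoc
    · filter_upwards [hbound] with x hx
      refine Eventually.of_forall fun t ht => ?_
      rw [norm_mul]
      exact mul_le_mul_of_nonneg_left (hx t (huIoc ht)) (norm_nonneg _)
    · exact Eventually.of_forall fun t ht => (hlim t (uIoc_of_le hb.le ▸ ht)).const_mul (g' t)
  refine Tendsto.congr' hparts ?_
  convert ((hlim b ⟨hb, le_rfl⟩).const_mul (g b)).sub hdom using 2
  rw [intervalIntegral.integral_mul_const,
    intervalIntegral.integral_eq_sub_of_hasDerivAt (huIcc ▸ hg) hint_g']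
  ring

theorem tendsto_fresnelDefect : Tendsto fresnelDefect atTop (𝓝 0) := by
  have hg (t : ℝ) : HasDerivAt (fun t : ℝ => ((1 + t ^ 2)⁻¹ : ℂ))
      (-(2 * t) / (1 + t ^ 2) ^ 2 : ℝ) t := by
    have := (((hasDerivAt_id t).fun_pow 2).const_add 1).fun_inv
      (by positivity : (1 + id t ^ 2 : ℝ) ≠ 0)
    simpa using this.ofReal_comp
  have hV (s : ℝ) (hs : 1 ≤ s) (t : ℝ) : HasDerivAt
      (fun t : ℝ => Complex.exp ((-s ^ 2 : ℝ) * Complex.I) * (fresnelIntegral (s * t) / s))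
      (Complex.exp ((-(s ^ 2 * (1 + t ^ 2)) : ℝ) * Complex.I)) t := by
    have hs0 : (s : ℂ) ≠ 0 := Complex.ofReal_ne_zero.2 (by positivity)
    have hcomp := (hasDerivAt_fresnelIntegral (s * t)).scomp t ((hasDerivAt_id t).const_mul s)
    refine ((hcomp.div_const (s : ℂ)).const_mul _).congr_deriv ?_
    rw [cexp_neg_sq_mul_one_add_sq, mul_one, Complex.real_smul, mul_div_cancel_left₀ _ hs0]
  have hnorm (s : ℝ) (hs : 1 ≤ s) (t : ℝ) :
      ‖Complex.exp ((-s ^ 2 : ℝ) * Complex.I) * (fresnelIntegral (s * t) / s)‖ ≤ √(π / 2) / s := by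
    rw [norm_mul, Complex.norm_exp_ofReal_mul_I, one_mul, norm_div,
      Complex.norm_of_nonneg (zero_le_one.trans hs)]
    gcongr
    exact norm_fresnelIntegral_le _
  have hlarge := eventually_ge_atTop (1 : ℝ)
  have key := tendsto_integral_mul_deriv (l := atTop) (ℓ := 0) (K := √(π / 2)) one_pos
    (fun t _ => hg t) ?_ (hlarge.mono fun s hs t _ => hV s hs t)
    (Eventually.of_forall fun s => by fun_prop)
    (Eventually.of_forall fun s => by simp [fresnelIntegral])
    (hlarge.mono fun s hs t _ => (hnorm s hs t).trans (div_le_self (sqrt_nonneg _) hs))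
    fun t _ => ?_
  · rw [mul_zero] at key
    refine key.congr fun s => ?_
    simp only [fresnelDefect, div_eq_inv_mul]
    push_cast
    rfl
  · refine Continuous.continuousOn (Complex.continuous_ofReal.comp ?_)
    exact (by fun_prop : Continuous _).div₀ (by fun_prop) fun t => by positivity
  · exact squeeze_zero_norm' (hlarge.mono fun s hs => hnorm s hs t)
      (tendsto_id.const_div_atTop _)

theorem exists_tendsto_fresnelIntegral :
    ∃ σ : ℝ, σ ≠ 0 ∧
      Tendsto fresnelIntegral atTop (𝓝 (σ * Complex.exp ((-(π / 4) : ℝ) * Complex.I))) := by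
  set c : ℂ := (√π / 2 : ℝ) * Complex.exp ((-(π / 4) : ℝ) * Complex.I) with hc
  have hexp_sq : Complex.exp ((-(π / 4) : ℝ) * Complex.I) ^ 2 = -Complex.I := by
    rw [← Complex.exp_nat_mul, ← Complex.exp_neg_pi_div_two_mul_I]
    push_cast
    ring_nf
  have hcsq : c ^ 2 = -Complex.I * (π / 4) := by
    rw [hc, mul_pow, hexp_sq, ← Complex.ofReal_pow, div_pow, sq_sqrt pi_pos.le]
    push_cast
    ring
  have hne : √π / 2 ≠ 0 := by positivity
  have hc0 : c ≠ 0 := mul_ne_zero (Complex.ofReal_ne_zero.2 hne) (Complex.exp_ne_zero _)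
  have hsq : Tendsto (fun s => fresnelIntegral s ^ 2) atTop (𝓝 (c ^ 2)) := by
    simp only [hcsq, fresnelIntegral_sq]
    simpa using (tendsto_fresnelDefect.const_sub (π / 4 : ℂ)).const_mul (-Complex.I)
  rcases tendsto_or_tendsto_neg_of_tendsto_sq continuous_fresnelIntegral hc0 hsq with h | h
  · exact ⟨√π / 2, hne, h⟩
  · refine ⟨-(√π / 2), neg_ne_zero.2 hne, ?_⟩
    rwa [Complex.ofReal_neg, neg_mul]

theorem hasDerivAt_sqrt_two_mul_fresnelIntegral {x : ℝ} (hx : 0 ≤ x) (t : ℝ) :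
    HasDerivAt (fun t => (√2 : ℂ) * fresnelIntegral (√(2 * x) * sin (t / 2)))
      (√x * cos (t / 2) * Complex.exp ((-(x * (1 - cos t)) : ℝ) * Complex.I)) t := by
  have hinner :
      HasDerivAt (fun t => √(2 * x) * sin (t / 2)) (√(2 * x) * (cos (t / 2) * (1 / 2))) t :=
    (((hasDerivAt_id t).div_const 2).sin).const_mul _
  have hphase : (√(2 * x) * sin (t / 2)) ^ 2 = x * (1 - cos t) := by
    rw [mul_pow, sq_sqrt (by positivity), sin_sq_eq_half_sub, mul_div_cancel₀ t two_ne_zero]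
    ring
  have hsqrt : (√2 : ℂ) * √(2 * x) = 2 * √x := by
    rw [sqrt_mul zero_le_two, Complex.ofReal_mul, ← mul_assoc, ← Complex.ofReal_mul,
      mul_self_sqrt zero_le_two, Complex.ofReal_ofNat]
  refine (((hasDerivAt_fresnelIntegral _).scomp t hinner).const_mul (√2 : ℂ)).congr_deriv ?_
  rw [hphase, Complex.real_smul]
  simp only [Complex.ofReal_mul, Complex.ofReal_div, Complex.ofReal_one, Complex.ofReal_ofNat]
  linear_combination ((cos (t / 2) : ℝ) / 2 *
    Complex.exp ((-(x * (1 - cos t)) : ℝ) * Complex.I)) * hsqrt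

-- With `V(t) = √2 ∫₀^{√(2x) sin (t/2)} e^{-iv²} dv`, the integrand is `V'(t) F(t) / cos (t/2)`.
theorem tendsto_sqrt_mul_integral_cexp_cos {F : ℝ → ℂ} {ℓ : ℂ} (hF : ContDiff ℝ 1 F)
    (hℓ : Tendsto fresnelIntegral atTop (𝓝 ℓ)) :
    Tendsto (fun x : ℝ => ∫ t in (0 : ℝ)..π / 2,
      F t * (√x * Complex.exp ((-(x * (1 - cos t)) : ℝ) * Complex.I)))
      atTop (𝓝 (F 0 * (√2 * ℓ))) := by
  have hcos {t : ℝ} (ht : t ∈ Icc 0 (π / 2)) : (cos (t / 2) : ℂ) ≠ 0 :=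
    Complex.ofReal_ne_zero.2 (cos_pos_of_mem_Ioo
      ⟨by linarith [ht.1, pi_pos], by linarith [ht.2, pi_pos]⟩).ne'
  have hcos_deriv (t : ℝ) :
      HasDerivAt (fun t => (cos (t / 2) : ℂ)) (-sin (t / 2) * (1 / 2) : ℝ) t :=
    ((hasDerivAt_id t).div_const 2).cos.ofReal_comp
  have hsin_lim (t : ℝ) (ht : t ∈ Ioc 0 (π / 2)) :
      Tendsto (fun x => √(2 * x) * sin (t / 2)) atTop atTop :=
    (tendsto_sqrt_atTop.comp (tendsto_id.const_mul_atTop two_pos)).atTop_mul_const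
      (sin_pos_of_pos_of_lt_pi (by linarith [ht.1]) (by linarith [ht.2, pi_pos]))
  have key := tendsto_integral_mul_deriv (l := atTop) (K := √2 * √(π / 2)) pi_div_two_pos
    (fun t ht => (hF.differentiable one_ne_zero t).hasDerivAt.fun_div (hcos_deriv t) (hcos ht)) ?_
    ((eventually_ge_atTop 0).mono fun x hx t _ => hasDerivAt_sqrt_two_mul_fresnelIntegral hx t)
    (Eventually.of_forall fun x => by fun_prop)
    (Eventually.of_forall fun x => by simp [fresnelIntegral]) ?_
    fun t ht => (hℓ.comp (hsin_lim t ht)).const_mul (√2 : ℂ)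
  · simp only [zero_div, cos_zero, Complex.ofReal_one, div_one] at key
    refine key.congr fun x => intervalIntegral.integral_congr fun t ht => ?_
    rw [uIcc_of_le pi_div_two_pos.le] at ht
    have := hcos ht
    field_simp
  · have := hF.continuous_deriv le_rfl
    have := hF.continuous
    exact ContinuousOn.div₀ (by fun_prop) (by fun_prop) fun t ht => pow_ne_zero 2 (hcos ht)
  · refine Eventually.of_forall fun x t _ => ?_
    rw [norm_mul, Complex.norm_of_nonneg (sqrt_nonneg 2)]
    gcongr
    exact norm_fresnelIntegral_le _

theorem integral_neg_self {E : Type*} [NormedAddCommGroup E] [NormedSpace ℝ E] {f : ℝ → E}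
    (hf : Continuous f) (b : ℝ) :
    ∫ t in -b..b, f t = ∫ t in (0 : ℝ)..b, (f t + f (-t)) := by
  rw [intervalIntegral.integral_add (hf.intervalIntegrable _ _)
    ((by fun_prop : Continuous fun t => f (-t)).intervalIntegrable _ _),
    intervalIntegral.integral_comp_neg, neg_zero,
    add_comm, intervalIntegral.integral_add_adjacent_intervals] <;>
  exact hf.intervalIntegrable _ _

theorem tendsto_sqrt_mul_integral_cexp_cos_symm {F : ℝ → ℂ} {ℓ : ℂ} (hF : ContDiff ℝ 1 F)
    (hℓ : Tendsto fresnelIntegral atTop (𝓝 ℓ)) :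
    Tendsto (fun x : ℝ => √x * ∫ t in -(π / 2)..π / 2,
      F t * Complex.exp ((-(x * (1 - cos t)) : ℝ) * Complex.I))
      atTop (𝓝 (2 * √2 * ℓ * F 0)) := by
  have hsym : ContDiff ℝ 1 fun t => F t + F (-t) := hF.add (hF.comp contDiff_neg)
  have := hF.continuous
  refine ((tendsto_sqrt_mul_integral_cexp_cos hsym hℓ).congr fun x => ?_).trans_eq ?_
  · rw [integral_neg_self (by fun_prop), ← intervalIntegral.integral_const_mul]
    simp only [cos_neg, add_mul, mul_add, mul_left_comm]
  · rw [neg_zero]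
    ring_nf

theorem besselCosMoment_eq_re (n : ℕ) (ν x : ℝ) :
    besselCosMoment n ν x
      = (Complex.exp ((x - ν * (π / 2) + n * (π / 2) : ℝ) * Complex.I) *
        ∫ t in -(π / 2)..π / 2, (cos t ^ n * Complex.exp ((-(ν * t) : ℝ) * Complex.I)) *
          Complex.exp ((-(x * (1 - cos t)) : ℝ) * Complex.I)).re := by
  have hshift := intervalIntegral.integral_comp_add_left (a := -(π / 2)) (b := π / 2)
    (fun θ => sin θ ^ n * cos (x * sin θ - ν * θ + n * (π / 2))) (π / 2)
  rw [add_neg_cancel, add_halves] at hshift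
  have hpoint (t : ℝ) : Complex.exp ((x - ν * (π / 2) + n * (π / 2) : ℝ) * Complex.I) *
      ((cos t ^ n * Complex.exp ((-(ν * t) : ℝ) * Complex.I)) *
        Complex.exp ((-(x * (1 - cos t)) : ℝ) * Complex.I))
      = (cos t ^ n : ℝ) *
        Complex.exp ((x * cos t - ν * (π / 2 + t) + n * (π / 2) : ℝ) * Complex.I) := by
    rw [mul_assoc, mul_left_comm, ← Complex.exp_add, ← Complex.exp_add]
    push_cast
    ring_nf
  rw [besselCosMoment, ← hshift, ← intervalIntegral.integral_const_mul]
  simp only [hpoint]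
  rw [← Complex.reCLM_apply, ← Complex.reCLM.intervalIntegral_comp_comm]
  · simp only [Complex.reCLM_apply, Complex.re_ofReal_mul, Complex.exp_ofReal_mul_I_re,
      add_comm (π / 2), sin_add_pi_div_two]
  · exact (by fun_prop : Continuous _).intervalIntegrable _ _

/-- The phase `x - νπ/2 - π/4` of Hankel's large-argument asymptotics of Bessel functions. -/
noncomputable def hankelPhase (ν x : ℝ) : ℝ := x - ν * (π / 2) - π / 4

theorem tendsto_sqrt_mul_besselCosMoment {σ : ℝ}
    (hσ : Tendsto fresnelIntegral atTop (𝓝 (σ * Complex.exp ((-(π / 4) : ℝ) * Complex.I))))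
    (n : ℕ) (ν : ℝ) :
    Tendsto (fun x => √x * besselCosMoment n ν x
      - 2 * √2 * σ * cos (hankelPhase ν x + n * (π / 2))) atTop (𝓝 0) := by
  have hF : ContDiff ℝ 1 fun t : ℝ =>
      (cos t : ℂ) ^ n * Complex.exp ((-(ν * t) : ℝ) * Complex.I) :=
    ((Complex.ofRealCLM.contDiff.comp contDiff_cos).pow n).mul
      ((Complex.ofRealCLM.contDiff.comp (by fun_prop : ContDiff ℝ 1 fun t : ℝ => -(ν * t))).mul
        contDiff_const).cexp
  have hstat := (tendsto_sub_nhds_zero_iff.2 (tendsto_sqrt_mul_integral_cexp_cos_symm hF hσ)).norm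
  simp only [cos_zero, Complex.ofReal_one, one_pow, mul_zero, neg_zero, Complex.ofReal_zero,
    zero_mul, Complex.exp_zero, mul_one, norm_zero] at hstat
  refine squeeze_zero_norm (fun x => ?_) hstat
  set α : ℝ := x - ν * (π / 2) + n * (π / 2) with hα
  have hcos : cos (hankelPhase ν x + n * (π / 2))
      = (Complex.exp (α * Complex.I) * Complex.exp ((-(π / 4) : ℝ) * Complex.I)).re := by
    rw [← Complex.exp_add, ← add_mul, ← Complex.ofReal_add, Complex.exp_ofReal_mul_I_re, hα,
      hankelPhase]
    ring_nf
  rw [hcos, besselCosMoment_eq_re, ← hα, ← Complex.re_ofReal_mul, ← Complex.re_ofReal_mul,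
    ← Complex.sub_re]
  have hunit (w : ℂ) : ‖w‖ = ‖Complex.exp (α * Complex.I) * w‖ := by
    rw [norm_mul, Complex.norm_exp_ofReal_mul_I, one_mul]
  refine (Complex.abs_re_le_norm _).trans_eq (Eq.trans ?_ (hunit _).symm)
  congr 1
  push_cast
  ring

theorem besselExpMoment_le (n : ℕ) {ν x : ℝ} (hν : 0 < ν) (hx : 1 < x) :
    besselExpMoment n ν x ≤ n.factorial / (x - 1) := by
  have hmaj : ∫ t in Ioi (0 : ℝ), n.factorial * exp (-(x - 1) * t) = n.factorial / (x - 1) := by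
    rw [integral_const_mul, integral_exp_mul_Ioi (by linarith)]
    simp [div_eq_mul_inv, neg_inv]
  rw [← hmaj]
  refine setIntegral_mono_on (integrableOn_sinh_pow_mul_exp n hν (by linarith))
    ((exp_neg_integrableOn_Ioi 0 (by linarith)).const_mul _) measurableSet_Ioi fun t ht => ?_
  have ht0 : 0 < t := ht
  have hsinh : t ≤ sinh t := self_le_sinh_iff.2 ht0.le
  calc sinh t ^ n * exp (-x * sinh t - ν * t)
      = sinh t ^ n * exp (-1 * sinh t) * exp (-(x - 1) * sinh t - ν * t) := by
        rw [mul_assoc, ← exp_add]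
        ring_nf
    _ ≤ n.factorial * exp (-(x - 1) * t) := by
        gcongr
        · simpa using pow_mul_exp_neg_mul_le n one_pos (ht0.le.trans hsinh)
        · nlinarith [mul_pos hν ht0]

theorem tendsto_sqrt_mul_besselExpMoment (n : ℕ) {ν : ℝ} (hν : 0 < ν) :
    Tendsto (fun x => √x * besselExpMoment n ν x) atTop (𝓝 0) := by
  have hmaj : Tendsto (fun x => 2 * n.factorial / √x) atTop (𝓝 0) :=
    tendsto_sqrt_atTop.const_div_atTop _
  refine squeeze_zero' (Eventually.of_forall fun x => mul_nonneg (sqrt_nonneg x)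
    (besselExpMoment_nonneg n ν x)) ?_ hmaj
  filter_upwards [eventually_ge_atTop 2] with x hx
  calc √x * besselExpMoment n ν x
      ≤ √x * (n.factorial / (x / 2)) := by
        gcongr
        refine (besselExpMoment_le n hν (by linarith)).trans ?_
        gcongr
        linarith
    _ = 2 * n.factorial / √x := by
        have hsqrt : √x ≠ 0 := (sqrt_pos.2 (by linarith)).ne'
        field_simp
        exact sq_sqrt (by linarith)

/-- Hankel's large-argument asymptotics, with amplitude `σ`, for a solution `y` of Bessel's equation
and `z = x y'`: `√x y ∼ σ cos ω` and `z / √x ∼ -σ sin ω` for `ω = x - νπ/2 - π/4`. -/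
structure HankelAsymptotics (ν σ : ℝ) (y z : ℝ → ℝ) : Prop where
  tendsto_fst : Tendsto (fun x => √x * y x - σ * cos (hankelPhase ν x)) atTop (𝓝 0)
  tendsto_snd : Tendsto (fun x => z x / √x + σ * sin (hankelPhase ν x)) atTop (𝓝 0)

theorem exists_hankelAsymptotics_besselJ {ν : ℝ} (hν : 0 < ν) :
    ∃ σ, σ ≠ 0 ∧ HankelAsymptotics ν σ (besselJ ν) (besselJSlope ν) := by
  obtain ⟨σ, hσ0, hσ⟩ := exists_tendsto_fresnelIntegral
  refine ⟨2 * √2 * σ / π, by positivity, ⟨?_, ?_⟩⟩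
  · have h := ((tendsto_sqrt_mul_besselCosMoment hσ 0 ν).const_mul (1 / π)).sub
      ((tendsto_sqrt_mul_besselExpMoment 0 hν).const_mul (sin (ν * π) / π))
    rw [mul_zero, mul_zero, sub_zero] at h
    refine h.congr fun x => ?_
    rw [besselJ_eq_moments, Nat.cast_zero, zero_mul, add_zero]
    ring
  · have h := ((tendsto_sqrt_mul_besselCosMoment hσ 1 ν).const_mul (1 / π)).add
      ((tendsto_sqrt_mul_besselExpMoment 1 hν).const_mul (sin (ν * π) / π))
    rw [mul_zero, mul_zero, add_zero] at h
    refine h.congr fun x => ?_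
    rw [besselJSlope, mul_div_right_comm, div_sqrt, Nat.cast_one, one_mul, cos_add_pi_div_two]
    ring

/-! ### No zeros up to the transition region -/

theorem monotoneOn_of_hasDerivAt_nonneg {s : Set ℝ} (hs : Convex ℝ s) {f f' : ℝ → ℝ}
    (hf : ∀ x ∈ s, HasDerivAt f (f' x) x) (hf' : ∀ x ∈ s, 0 ≤ f' x) : MonotoneOn f s :=
  monotoneOn_of_hasDerivWithinAt_nonneg hs
    (fun x hx => (hf x hx).continuousAt.continuousWithinAt)
    (fun x hx => (hf x (interior_subset hx)).hasDerivWithinAt)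
    fun x hx => hf' x (interior_subset hx)

theorem HankelAsymptotics.not_eventually_eq_zero {ν σ : ℝ} {y z : ℝ → ℝ}
    (H : HankelAsymptotics ν σ y z) (hσ : σ ≠ 0) : ¬∀ᶠ x in atTop, y x = 0 ∧ z x = 0 := by
  intro hzero
  have hlim := (H.tendsto_fst.pow 2).add (H.tendsto_snd.pow 2)
  have hconst : (fun x => (√x * y x - σ * cos (hankelPhase ν x)) ^ 2
      + (z x / √x + σ * sin (hankelPhase ν x)) ^ 2) =ᶠ[atTop] fun _ => σ ^ 2 := by
    filter_upwards [hzero] with x ⟨hy, hz⟩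
    rw [hy, hz]
    linear_combination σ ^ 2 * sin_sq_add_cos_sq (hankelPhase ν x)
  have hsq := tendsto_nhds_unique (hlim.congr' hconst) tendsto_const_nhds
  exact pow_ne_zero 2 hσ (by simpa using hsq.symm)

namespace BesselSystem

variable {ν x : ℝ} {y z : ℝ → ℝ} (h : BesselSystem ν y z)
include h

theorem neg : BesselSystem ν (-y) (-z) where
  hasDerivAt_fst hx := (h.hasDerivAt_fst hx).neg.congr_deriv (neg_div _ _).symm
  hasDerivAt_snd hx := (h.hasDerivAt_snd hx).neg.congr_deriv (by simp [neg_div])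

theorem eq_zero_of_ge {x₀ : ℝ} (hx₀ : 0 < x₀) (hy : y x₀ = 0) (hz : z x₀ = 0) (hx : x₀ ≤ x) :
    y x = 0 ∧ z x = 0 := by
  have hderiv {t : ℝ} (ht : x₀ ≤ t) : HasDerivAt (fun t => (y t, z t))
      (z t / t, -((t ^ 2 - ν ^ 2) * y t) / t) t :=
    (h.hasDerivAt_fst (hx₀.trans_le ht)).prodMk (h.hasDerivAt_snd (hx₀.trans_le ht))
  have hgrowth (t : ℝ) (ht : t ∈ Ico x₀ x) :
      ‖(z t / t, -((t ^ 2 - ν ^ 2) * y t) / t)‖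
        ≤ (1 + x ^ 2 + ν ^ 2) / x₀ * ‖(y t, z t)‖ + 0 := by
    have ht0 : 0 < t := hx₀.trans_le ht.1
    have hyt : |y t| ≤ ‖(y t, z t)‖ := norm_fst_le (y t, z t)
    have hzt : |z t| ≤ ‖(y t, z t)‖ := norm_snd_le (y t, z t)
    have hcoeff : |t ^ 2 - ν ^ 2| ≤ 1 + x ^ 2 + ν ^ 2 := by
      rw [abs_le]
      constructor <;> nlinarith [ht.2, sq_nonneg t, sq_nonneg ν]
    rw [add_zero, div_mul_eq_mul_div]
    refine norm_prod_le_iff.2 ⟨?_, ?_⟩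
    · rw [norm_div, norm_eq_abs, norm_of_nonneg ht0.le]
      refine div_le_div₀ (by positivity) ?_ hx₀ ht.1
      nlinarith [norm_nonneg (y t, z t), sq_nonneg x, sq_nonneg ν]
    · rw [norm_div, norm_neg, norm_mul, norm_of_nonneg ht0.le, norm_eq_abs, norm_eq_abs]
      exact div_le_div₀ (by positivity)
        (mul_le_mul hcoeff hyt (abs_nonneg _) (by positivity)) hx₀ ht.1
  have hgronwall := norm_le_gronwallBound_of_norm_deriv_right_le (δ := 0)
    (fun t ht => (hderiv ht.1).continuousAt.continuousWithinAt)
    (fun t ht => (hderiv ht.1).hasDerivWithinAt) (by simp [hy, hz]) hgrowth x ⟨hx, le_rfl⟩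
  rw [gronwallBound_ε0_δ0, norm_le_zero_iff] at hgronwall
  exact Prod.mk_eq_zero.1 hgronwall

theorem not_both_zero {σ : ℝ} (H : HankelAsymptotics ν σ y z) (hσ : σ ≠ 0) (hx : 0 < x) :
    ¬(y x = 0 ∧ z x = 0) := fun ⟨hy, hz⟩ =>
  H.not_eventually_eq_zero hσ ((eventually_ge_atTop x).mono fun _ => h.eq_zero_of_ge hx hy hz)

theorem monotoneOn_mul : MonotoneOn (fun x => y x * z x) (Ioc 0 ν) := by
  refine monotoneOn_of_hasDerivAt_nonneg (convex_Ioc 0 ν)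
    (f' := fun x => (z x ^ 2 + (ν ^ 2 - x ^ 2) * y x ^ 2) / x)
    (fun x hx => ((h.hasDerivAt_fst hx.1).fun_mul (h.hasDerivAt_snd hx.1)).congr_deriv (by ring))
    fun x hx => ?_
  have hx0 := hx.1
  have : 0 ≤ ν ^ 2 - x ^ 2 := by nlinarith [hx.2]
  positivity

theorem hasDerivAt_fst_sq (hx : 0 < x) : HasDerivAt (fun x => y x ^ 2) (2 * (y x * z x) / x) x :=
  ((h.hasDerivAt_fst hx).fun_pow 2).congr_deriv (by ring)

-- If `y z = -m < 0` at `a`, then `(y²)' ≤ -2m / x` on `(0, a]`, so `y²` blows up at the origin.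
theorem mul_nonneg_of_bounded {C : ℝ} (hC : ∀ {x}, 0 < x → |y x| ≤ C) (hx : x ∈ Ioc 0 ν) :
    0 ≤ y x * z x := by
  by_contra! hneg
  set m := -(y x * z x)
  have hm0 : 0 < m := neg_pos.2 hneg
  have hmono : MonotoneOn (fun t => -(y t ^ 2 + 2 * m * log t)) (Ioc 0 x) := by
    refine monotoneOn_of_hasDerivAt_nonneg (convex_Ioc 0 x)
      (fun t ht => ((h.hasDerivAt_fst_sq ht.1).fun_add
        ((hasDerivAt_log ht.1.ne').const_mul (2 * m))).fun_neg) fun t ht => ?_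
    have hle : y t * z t ≤ -m :=
      (h.monotoneOn_mul ⟨ht.1, ht.2.trans hx.2⟩ hx ht.2).trans_eq (neg_neg _).symm
    rw [← div_eq_mul_inv, ← add_div, ← neg_div]
    exact div_nonneg (by linarith) ht.1.le
  set a := x * exp (-((C ^ 2 + 1) / (2 * m))) with ha
  have ha0 : 0 < a := mul_pos hx.1 (exp_pos _)
  have hax : a ≤ x :=
    mul_le_of_le_one_right hx.1.le (exp_le_one_iff.2 (neg_nonpos.2 (by positivity)))
  have hgrowth := hmono ⟨ha0, hax⟩ ⟨hx.1, le_rfl⟩ hax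
  have hlog : 2 * m * log a = 2 * m * log x - (C ^ 2 + 1) := by
    rw [ha, log_mul hx.1.ne' (exp_pos _).ne', log_exp]
    field_simp
    ring
  have hbound : y a ^ 2 ≤ C ^ 2 := sq_le_sq.2 ((hC ha0).trans (le_abs_self C))
  linarith [sq_nonneg (y x)]

theorem snd_add_mul_log_nonneg {Y t : ℝ} (hν : 0 < ν) (hY : 0 ≤ Y)
    (hle : ∀ s ∈ Icc ν x, y s ≤ Y) (hz : 0 ≤ z ν) (ht : t ∈ Icc ν x) :
    0 ≤ z t + (x ^ 2 - ν ^ 2) * Y * log (t / ν) := by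
  have hmono : MonotoneOn (fun s => z s + (x ^ 2 - ν ^ 2) * Y * log s) (Icc ν x) := by
    refine monotoneOn_of_hasDerivAt_nonneg (convex_Icc ν x) (fun s hs =>
      (h.hasDerivAt_snd (hν.trans_le hs.1)).fun_add
        ((hasDerivAt_log (hν.trans_le hs.1).ne').const_mul _)) fun s hs => ?_
    have hs0 : 0 < s := hν.trans_le hs.1
    have hcoeff : 0 ≤ s ^ 2 - ν ^ 2 := sub_nonneg.2 (pow_le_pow_left₀ hν.le hs.1 2)
    have hforce : (s ^ 2 - ν ^ 2) * y s ≤ (x ^ 2 - ν ^ 2) * Y :=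
      (mul_le_mul_of_nonneg_left (hle s hs) hcoeff).trans
        (mul_le_mul_of_nonneg_right (by gcongr; exact hs.2) hY)
    rw [← div_eq_mul_inv, ← add_div]
    exact div_nonneg (by linarith) hs0.le
  have hzt := hmono (left_mem_Icc.2 (ht.1.trans ht.2)) ht ht.1
  rw [log_div (hν.trans_le ht.1).ne' hν.ne']
  linarith

-- Compare `y` with its maximum `Y` over `[ν, x]`: integrating the two equations of the system
-- gives `y x ≥ Y (1 - (x² - ν²) log² (x / ν))`.
theorem pos_of_sq_sub_sq_mul_log_sq_lt_one (hν : 0 < ν) (hy : 0 < y ν) (hz : 0 ≤ z ν)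
    (hx : ν ≤ x) (hlt : (x ^ 2 - ν ^ 2) * log (x / ν) ^ 2 < 1) : 0 < y x := by
  have hpos {t : ℝ} (ht : t ∈ Icc ν x) : 0 < t := hν.trans_le ht.1
  have hν_mem : ν ∈ Icc ν x := left_mem_Icc.2 hx
  have hx_mem : x ∈ Icc ν x := right_mem_Icc.2 hx
  obtain ⟨s, hs, hmax⟩ := isCompact_Icc.exists_isMaxOn ⟨ν, hν_mem⟩ fun t ht =>
    (h.hasDerivAt_fst (hpos ht)).continuousAt.continuousWithinAt
  have hys : 0 < y s := hy.trans_le (hmax hν_mem)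
  set K := (x ^ 2 - ν ^ 2) * y s
  have hK : 0 ≤ K := mul_nonneg (sub_nonneg.2 (pow_le_pow_left₀ hν.le hx 2)) hys.le
  have hmono : MonotoneOn (fun t => y t + K * log (x / ν) * log t) (Icc ν x) := by
    refine monotoneOn_of_hasDerivAt_nonneg (convex_Icc ν x) (fun t ht =>
      (h.hasDerivAt_fst (hpos ht)).fun_add
        ((hasDerivAt_log (hpos ht).ne').const_mul (K * log (x / ν)))) fun t ht => ?_
    have hzt := h.snd_add_mul_log_nonneg hν hys.le (fun s hs => hmax hs) hz ht
    have hlog : log (t / ν) ≤ log (x / ν) :=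
      log_le_log (div_pos (hpos ht) hν) (by gcongr; exact ht.2)
    rw [← div_eq_mul_inv, ← add_div]
    exact div_nonneg (hzt.trans (by gcongr)) (hpos ht).le
  have hyx := hmono hs hx_mem hs.2
  have hL : 0 ≤ log (x / ν) := log_nonneg ((one_le_div hν).2 hx)
  have hlogs : log x - log s ≤ log (x / ν) := by
    rw [log_div (hpos hx_mem).ne' hν.ne']
    linarith [log_le_log hν hs.1]
  calc 0 < y s * (1 - (x ^ 2 - ν ^ 2) * log (x / ν) ^ 2) := mul_pos hys (sub_pos.2 hlt)
    _ = y s - K * log (x / ν) * log (x / ν) := by ring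
    _ ≤ y s - K * log (x / ν) * (log x - log s) := by gcongr
    _ ≤ y x := by linarith

variable {C σ : ℝ} (hC : ∀ {x}, 0 < x → |y x| ≤ C) (H : HankelAsymptotics ν σ y z) (hσ : σ ≠ 0)
include hC H hσ

theorem ne_zero_of_le_order (hx : x ∈ Ioc 0 ν) : y x ≠ 0 := by
  intro hyx
  have hmono : MonotoneOn (fun t => y t ^ 2) (Ioc 0 ν) :=
    monotoneOn_of_hasDerivAt_nonneg (convex_Ioc 0 ν) (fun t ht => h.hasDerivAt_fst_sq ht.1)
      fun t ht => div_nonneg (mul_nonneg zero_le_two (h.mul_nonneg_of_bounded hC ht)) ht.1.le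
  have hzero (t : ℝ) (ht : t ∈ Ioc 0 x) : y t = 0 := by
    have hle := hmono ⟨ht.1, ht.2.trans hx.2⟩ hx ht.2
    simp only [hyx] at hle
    exact pow_eq_zero_iff two_ne_zero |>.1 (le_antisymm (by simpa using hle) (sq_nonneg _))
  have hhalf : 0 < x / 2 := half_pos hx.1
  have hlocal : y =ᶠ[𝓝 (x / 2)] fun _ => 0 :=
    mem_of_superset (Ioo_mem_nhds hhalf (half_lt_self hx.1)) fun t ht => hzero t ⟨ht.1, ht.2.le⟩
  have hz := (h.hasDerivAt_fst hhalf).unique ((hasDerivAt_const _ _).congr_of_eventuallyEq hlocal)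
  exact h.not_both_zero H hσ hhalf
    ⟨hlocal.self_of_nhds, (div_eq_zero_iff.1 hz).resolve_right hhalf.ne'⟩

theorem ne_zero_of_cube_lt (hν : 0 < ν) (hx : 0 < x) (hlt : (x ^ 2 - ν ^ 2) ^ 3 < 4 * ν ^ 4) :
    y x ≠ 0 := by
  rcases le_or_gt x ν with hxν | hνx
  · exact h.ne_zero_of_le_order hC H hσ ⟨hx, hxν⟩
  have hν_mem : ν ∈ Ioc 0 ν := ⟨hν, le_rfl⟩
  have hP : 0 < x ^ 2 - ν ^ 2 := sub_pos.2 (pow_lt_pow_left₀ hνx hν.le two_ne_zero)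
  have hlog : log (x / ν) ≤ (x ^ 2 - ν ^ 2) / (2 * ν ^ 2) := by
    have := log_le_sub_one_of_pos (show 0 < (x / ν) ^ 2 by positivity)
    rw [log_pow] at this
    field_simp at this ⊢
    push_cast at this
    linarith
  have hsmall : (x ^ 2 - ν ^ 2) * log (x / ν) ^ 2 < 1 := calc
    _ ≤ (x ^ 2 - ν ^ 2) * ((x ^ 2 - ν ^ 2) / (2 * ν ^ 2)) ^ 2 := by
      have := log_nonneg ((one_le_div hν).2 hνx.le)
      gcongr
    _ = (x ^ 2 - ν ^ 2) ^ 3 / (4 * ν ^ 4) := by ring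
    _ < 1 := (div_lt_one (by positivity)).2 hlt
  have hsign := h.mul_nonneg_of_bounded hC hν_mem
  rcases (h.ne_zero_of_le_order hC H hσ hν_mem).lt_or_gt with hneg | hpos
  · have hz : z ν ≤ 0 := nonpos_of_mul_nonneg_right hsign hneg
    have := h.neg.pos_of_sq_sub_sq_mul_log_sq_lt_one hν (neg_pos.2 hneg) (neg_nonneg.2 hz)
      hνx.le hsmall
    exact (neg_pos.1 this).ne
  · have hz : 0 ≤ z ν := nonneg_of_mul_nonneg_right hsign hpos
    exact (h.pos_of_sq_sub_sq_mul_log_sq_lt_one hν hpos hz hνx.le hsmall).ne'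

end BesselSystem

/-! ### The Debye phase -/

/-- The WKB momentum `√(x² - ν²)` of Bessel's equation in the variable `log x`. -/
noncomputable def radialMomentum (ν x : ℝ) : ℝ := √(x ^ 2 - ν ^ 2)

/-- The leading WKB phase `√(x² - ν²) - ν arccos (ν / x)`, equal to `π x g(ν / x)`. -/
noncomputable def debyePhase (ν x : ℝ) : ℝ := radialMomentum ν x - ν * arccos (ν / x)

/-- Half the logarithmic derivative, in the variable `log x`, of `radialMomentum`; it removes the
first-order WKB error from the phase. -/
noncomputable def amplitudeRate (ν x : ℝ) : ℝ := x ^ 2 / (2 * radialMomentum ν x ^ 2)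

/-- The second-order relative perturbation of the squared momentum in the WKB approximation. -/
noncomputable def wkbPerturbation (ν x : ℝ) : ℝ :=
  x ^ 2 * (x ^ 2 + 4 * ν ^ 2) / (4 * radialMomentum ν x ^ 6)

/-- The total WKB phase error accumulated on `(x, ∞)`: the primitive of
`-radialMomentum * wkbPerturbation / x` vanishing at infinity. -/
noncomputable def debyeErrorBound (ν x : ℝ) : ℝ :=
  1 / (4 * radialMomentum ν x) + 5 * ν ^ 2 / (12 * radialMomentum ν x ^ 3)

section Debye

theorem continuous_radialMomentum (ν : ℝ) : Continuous (radialMomentum ν) := by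
  unfold radialMomentum
  fun_prop

theorem radialMomentum_self (ν : ℝ) : radialMomentum ν ν = 0 := by simp [radialMomentum]

variable {ν x : ℝ} (hν : 0 < ν)
include hν

theorem radialMomentum_sq (hx : ν ≤ x) : radialMomentum ν x ^ 2 = x ^ 2 - ν ^ 2 :=
  sq_sqrt (sub_nonneg.2 (pow_le_pow_left₀ hν.le hx 2))

theorem radialMomentum_pos (hx : ν < x) : 0 < radialMomentum ν x :=
  sqrt_pos.2 (sub_pos.2 (pow_lt_pow_left₀ hx hν.le two_ne_zero))

theorem radialMomentum_le_radialMomentum {t : ℝ} (hx : ν ≤ x) (hxt : x ≤ t) :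
    radialMomentum ν x ≤ radialMomentum ν t :=
  sqrt_le_sqrt (sub_le_sub_right (pow_le_pow_left₀ (hν.le.trans hx) hxt 2) _)

theorem hasDerivAt_radialMomentum (hx : ν < x) :
    HasDerivAt (radialMomentum ν) (x / radialMomentum ν x) x := by
  have hinner : HasDerivAt (fun x => x ^ 2 - ν ^ 2) (2 * x) x := by
    simpa using (hasDerivAt_pow 2 x).sub_const (ν ^ 2)
  exact (hinner.sqrt (sqrt_pos.1 (radialMomentum_pos hν hx)).ne').congr_deriv
    (mul_div_mul_left _ _ two_ne_zero)

theorem sqrt_one_sub_div_sq (hx : ν ≤ x) : √(1 - (ν / x) ^ 2) = radialMomentum ν x / x := by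
  have hx0 : 0 < x := hν.trans_le hx
  have hfrac : 1 - (ν / x) ^ 2 = (x ^ 2 - ν ^ 2) / x ^ 2 := by field_simp
  rw [hfrac, sqrt_div' _ (by positivity), sqrt_sq hx0.le, radialMomentum]

theorem mul_gfun_mul_pi_eq_debyePhase (hx : ν ≤ x) : x * gfun (ν / x) * π = debyePhase ν x := by
  have hx0 : 0 < x := hν.trans_le hx
  rw [gfun, sqrt_one_sub_div_sq hν hx, debyePhase]
  field_simp

theorem debyePhase_self : debyePhase ν ν = 0 := by
  simp [debyePhase, radialMomentum_self, div_self hν.ne']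

theorem continuousOn_debyePhase : ContinuousOn (debyePhase ν) (Ici ν) :=
  (continuous_radialMomentum ν).continuousOn.sub (continuousOn_const.mul
    (continuous_arccos.comp_continuousOn
      (continuousOn_const.div continuousOn_id fun _ hx => (hν.trans_le hx).ne')))

theorem hasDerivAt_debyePhase (hx : ν < x) :
    HasDerivAt (debyePhase ν) (radialMomentum ν x / x) x := by
  have hx0 : 0 < x := hν.trans hx
  have hr := radialMomentum_pos hν hx
  have hratio : HasDerivAt (fun x => ν / x) (-ν / x ^ 2) x :=
    ((hasDerivAt_inv hx0.ne').const_mul ν).congr_deriv (by ring)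
  have hgt : -1 < ν / x := neg_one_lt_zero.trans (div_pos hν hx0)
  have harccos := (hasDerivAt_arccos hgt.ne' ((div_lt_one hx0).2 hx).ne).comp x hratio
  refine ((hasDerivAt_radialMomentum hν hx).sub (harccos.const_mul ν)).congr_deriv ?_
  rw [sqrt_one_sub_div_sq hν hx.le]
  field_simp
  linear_combination -radialMomentum_sq hν hx.le

theorem strictMonoOn_debyePhase : StrictMonoOn (debyePhase ν) (Ici ν) := by
  refine strictMonoOn_of_hasDerivWithinAt_pos (convex_Ici ν) (continuousOn_debyePhase hν)
    (f' := fun x => radialMomentum ν x / x) ?_ ?_ <;> rw [interior_Ici] <;> intro x hx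
  · exact (hasDerivAt_debyePhase hν hx).hasDerivWithinAt
  · exact div_pos (radialMomentum_pos hν hx) (hν.trans hx)

theorem debyePhase_le (hx : ν ≤ x) :
    debyePhase ν x ≤ radialMomentum ν x ^ 3 / (3 * ν ^ 2) := by
  have hcont : ContinuousOn (fun x => radialMomentum ν x ^ 3 / (3 * ν ^ 2) - debyePhase ν x)
      (Ici ν) :=
    (((continuous_radialMomentum ν).pow 3).div_const _).continuousOn.sub
      (continuousOn_debyePhase hν)
  have hmono : MonotoneOn (fun x => radialMomentum ν x ^ 3 / (3 * ν ^ 2) - debyePhase ν x)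
      (Ici ν) := by
    refine monotoneOn_of_hasDerivWithinAt_nonneg (convex_Ici ν) hcont
      (f' := fun x => radialMomentum ν x ^ 3 / (ν ^ 2 * x)) ?_ ?_ <;>
      rw [interior_Ici] <;> intro x hx
    all_goals
      have hx0 : 0 < x := hν.trans hx
      have hr := radialMomentum_pos hν hx
    · refine HasDerivAt.hasDerivWithinAt (((((hasDerivAt_radialMomentum hν hx).fun_pow 3).div_const
        (3 * ν ^ 2)).fun_sub (hasDerivAt_debyePhase hν hx)).congr_deriv ?_)
      have := radialMomentum_sq hν (le_of_lt hx)
      push_cast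
      field_simp
      linear_combination -this
    · positivity
  have hle := hmono self_mem_Ici hx hx
  simp only [radialMomentum_self, debyePhase_self hν] at hle
  rw [zero_pow three_ne_zero, zero_div, sub_self] at hle
  exact sub_nonneg.1 hle

theorem hasDerivAt_amplitudeRate (hx : ν < x) :
    HasDerivAt (amplitudeRate ν) (-(x * ν ^ 2) / radialMomentum ν x ^ 4) x := by
  have hr := radialMomentum_pos hν hx
  refine ((hasDerivAt_pow 2 x).fun_div (((hasDerivAt_radialMomentum hν hx).fun_pow 2).const_mul 2)
    (by positivity)).congr_deriv ?_
  have := radialMomentum_sq hν hx.le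
  push_cast
  field_simp
  linear_combination x * this

theorem hasDerivAt_debyeErrorBound (hx : ν < x) : HasDerivAt (debyeErrorBound ν)
    (-(radialMomentum ν x * wkbPerturbation ν x / x)) x := by
  have hr := radialMomentum_pos hν hx
  have hr' := hasDerivAt_radialMomentum hν hx
  refine (((hasDerivAt_const x 1).fun_div (hr'.const_mul 4) (by positivity)).fun_add
    ((hasDerivAt_const x (5 * ν ^ 2)).fun_div ((hr'.fun_pow 3).const_mul 12)
      (by positivity))).congr_deriv ?_
  have := radialMomentum_sq hν hx.le
  rw [wkbPerturbation]
  push_cast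
  field_simp
  linear_combination -12 * x * this

theorem tendsto_radialMomentum_sub_self :
    Tendsto (fun x => radialMomentum ν x - x) atTop (𝓝 0) := by
  have hmaj : Tendsto (fun x => ν ^ 2 / x) atTop (𝓝 0) := tendsto_id.const_div_atTop _
  refine squeeze_zero_norm' ?_ hmaj
  filter_upwards [eventually_gt_atTop ν] with x hx
  have hx0 : 0 < x := hν.trans hx
  have hr := radialMomentum_pos hν hx
  have hr2 := radialMomentum_sq hν hx.le
  have hle : radialMomentum ν x ≤ x := by nlinarith
  rw [norm_eq_abs, abs_of_nonpos (by linarith), le_div_iff₀ hx0]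
  nlinarith

theorem tendsto_radialMomentum_div_self :
    Tendsto (fun x => radialMomentum ν x / x) atTop (𝓝 1) := by
  have h := ((tendsto_radialMomentum_sub_self hν).mul tendsto_inv_atTop_zero).add_const 1
  rw [mul_zero, zero_add] at h
  refine h.congr' ?_
  filter_upwards [eventually_gt_atTop 0] with x hx
  field_simp
  ring

theorem tendsto_debyeErrorBound : Tendsto (debyeErrorBound ν) atTop (𝓝 0) := by
  have hr : Tendsto (radialMomentum ν) atTop atTop := by
    simpa using (tendsto_radialMomentum_sub_self hν).add_atTop tendsto_id
  have hr3 : Tendsto (fun x => radialMomentum ν x ^ 3) atTop atTop :=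
    (tendsto_pow_atTop three_ne_zero).comp hr
  have h := ((hr.const_mul_atTop four_pos).const_div_atTop 1).add
    ((hr3.const_mul_atTop (by norm_num : (0 : ℝ) < 12)).const_div_atTop (5 * ν ^ 2))
  rwa [add_zero] at h

theorem mul_wkbPerturbation_div_nonneg (hx : ν < x) :
    0 ≤ radialMomentum ν x * wkbPerturbation ν x / x := by
  have hx0 : 0 < x := hν.trans hx
  have hr := radialMomentum_pos hν hx
  unfold wkbPerturbation
  positivity

theorem integrableOn_mul_wkbPerturbation_div (hx : ν < x) :
    IntegrableOn (fun t => radialMomentum ν t * wkbPerturbation ν t / t) (Ioi x) := by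
  simpa using (integrableOn_Ioi_deriv_of_nonpos'
    (fun t ht => hasDerivAt_debyeErrorBound hν (hx.trans_le ht))
    (fun t ht => neg_nonpos.2 (mul_wkbPerturbation_div_nonneg hν (hx.trans ht)))
    (tendsto_debyeErrorBound hν)).neg

theorem integral_mul_wkbPerturbation_div (hx : ν < x) :
    ∫ t in Ioi x, radialMomentum ν t * wkbPerturbation ν t / t = debyeErrorBound ν x := by
  have hftc := integral_Ioi_of_hasDerivAt_of_nonpos'
    (fun t ht => hasDerivAt_debyeErrorBound hν (hx.trans_le ht))
    (fun t ht => neg_nonpos.2 (mul_wkbPerturbation_div_nonneg hν (hx.trans ht)))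
    (tendsto_debyeErrorBound hν)
  rwa [integral_neg, zero_sub, neg_inj] at hftc

theorem tendsto_amplitudeRate_div_self :
    Tendsto (fun x => amplitudeRate ν x / x) atTop (𝓝 0) := by
  have h := (((tendsto_radialMomentum_div_self hν).inv₀ one_ne_zero).pow 2).mul
    (tendsto_inv_atTop_zero.div_const 2)
  rw [zero_div, mul_zero] at h
  refine h.congr' ?_
  filter_upwards [eventually_gt_atTop ν] with x hx
  have hx0 : 0 < x := hν.trans hx
  have hr := radialMomentum_pos hν hx
  rw [amplitudeRate]
  field_simp

theorem tendsto_debyePhase_sub_hankelPhase :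
    Tendsto (fun x => debyePhase ν x - hankelPhase ν x) atTop (𝓝 (π / 4)) := by
  have hratio : Tendsto (fun x => ν / x) atTop (𝓝 0) := tendsto_id.const_div_atTop _
  have harccos := (continuous_arccos.tendsto 0).comp hratio
  rw [arccos_zero] at harccos
  have h := ((tendsto_radialMomentum_sub_self hν).sub
    ((harccos.sub_const (π / 2)).const_mul ν)).add_const (π / 4)
  simp only [sub_self, mul_zero, zero_add] at h
  refine h.congr fun x => ?_
  rw [Function.comp_apply, debyePhase, hankelPhase]
  ring

end Debye

/-! ### The Prüfer phase of a solution -/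

/-- First Prüfer coordinate `r y` of a solution, with `r` the radial momentum. -/
noncomputable def pruferFst (ν : ℝ) (y : ℝ → ℝ) (x : ℝ) : ℝ := radialMomentum ν x * y x

/-- Second Prüfer coordinate `z + κ y` of a solution, where `z = x y'` and `κ` is the amplitude
rate. -/
noncomputable def pruferSnd (ν : ℝ) (y z : ℝ → ℝ) (x : ℝ) : ℝ := z x + amplitudeRate ν x * y x

/-- Squared Prüfer amplitude. -/
noncomputable def pruferNormSq (ν : ℝ) (y z : ℝ → ℝ) (x : ℝ) : ℝ :=
  pruferFst ν y x ^ 2 + pruferSnd ν y z x ^ 2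

/-- Speed of the true Prüfer angle in excess of the WKB speed `radialMomentum ν x / x`. -/
noncomputable def phaseDefectRate (ν : ℝ) (y z : ℝ → ℝ) (x : ℝ) : ℝ :=
  radialMomentum ν x * wkbPerturbation ν x / x * (pruferFst ν y x ^ 2 / pruferNormSq ν y z x)

/-- Total deviation, over `(x, ∞)`, of the Prüfer angle from the WKB phase. -/
noncomputable def phaseDefect (ν : ℝ) (y z : ℝ → ℝ) (x : ℝ) : ℝ :=
  ∫ t in Ioi x, phaseDefectRate ν y z t

/-- The Prüfer angle, normalised at infinity so that it matches Hankel's asymptotics. -/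
noncomputable def pruferPhase (ν : ℝ) (y z : ℝ → ℝ) (x : ℝ) : ℝ :=
  debyePhase ν x + π / 4 - phaseDefect ν y z x

/-- Component of the Prüfer vector orthogonal to the direction predicted by `pruferPhase`. -/
noncomputable def pruferResidual (ν : ℝ) (y z : ℝ → ℝ) (x : ℝ) : ℝ :=
  pruferFst ν y x * cos (pruferPhase ν y z x) - pruferSnd ν y z x * sin (pruferPhase ν y z x)

theorem hasDerivAt_integral_Ioi {f : ℝ → ℝ} {a x : ℝ} (hf : ContinuousOn f (Ioi a))
    (hf_int : ∀ b, a < b → IntegrableOn f (Ioi b)) (hx : a < x) :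
    HasDerivAt (fun x => ∫ t in Ioi x, f t) (-f x) x := by
  obtain ⟨b, hab, hbx⟩ := exists_between hx
  have hprim : HasDerivAt (fun x => ∫ t in b..x, f t) (f x) x :=
    intervalIntegral.integral_hasDerivAt_right
      (hf.mono fun t ht => hab.trans_le (uIcc_of_le hbx.le ▸ ht).1).intervalIntegrable
      (hf.stronglyMeasurableAtFilter isOpen_Ioi x hx) (hf.continuousAt (Ioi_mem_nhds hx))
  refine (hprim.const_sub (∫ t in Ioi b, f t)).congr_of_eventuallyEq ?_
  filter_upwards [Ioi_mem_nhds hbx] with t ht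
  rw [← intervalIntegral.integral_Ioi_sub_Ioi (hf_int b hab) (le_of_lt ht), sub_sub_cancel]

theorem tendsto_mul_cos_zero {f : ℝ → ℝ} {l : Filter ℝ} (hf : Tendsto f l (𝓝 0)) (φ : ℝ → ℝ) :
    Tendsto (fun x => f x * cos (φ x)) l (𝓝 0) :=
  hf.zero_mul_isBoundedUnder_le (isBoundedUnder_of ⟨1, fun x => abs_cos_le_one (φ x)⟩)

theorem tendsto_mul_sin_zero {f : ℝ → ℝ} {l : Filter ℝ} (hf : Tendsto f l (𝓝 0)) (φ : ℝ → ℝ) :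
    Tendsto (fun x => f x * sin (φ x)) l (𝓝 0) :=
  hf.zero_mul_isBoundedUnder_le (isBoundedUnder_of ⟨1, fun x => abs_sin_le_one (φ x)⟩)

namespace BesselSystem

variable {ν σ x : ℝ} {y z : ℝ → ℝ} (h : BesselSystem ν y z) (hν : 0 < ν)
include h hν

theorem hasDerivAt_pruferFst (hx : ν < x) : HasDerivAt (pruferFst ν y)
    ((amplitudeRate ν x * pruferFst ν y x + radialMomentum ν x * pruferSnd ν y z x) / x) x := by
  have hr := radialMomentum_pos hν hx
  refine ((hasDerivAt_radialMomentum hν hx).mul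
    (h.hasDerivAt_fst (hν.trans hx))).congr_deriv ?_
  rw [pruferFst, pruferSnd, amplitudeRate]
  field_simp
  ring

theorem hasDerivAt_pruferSnd (hx : ν < x) : HasDerivAt (pruferSnd ν y z)
    ((amplitudeRate ν x * pruferSnd ν y z x
      - radialMomentum ν x * (1 + wkbPerturbation ν x) * pruferFst ν y x) / x) x := by
  have hx0 := hν.trans hx
  have hr := radialMomentum_pos hν hx
  refine ((h.hasDerivAt_snd hx0).add ((hasDerivAt_amplitudeRate hν hx).mul
    (h.hasDerivAt_fst hx0))).congr_deriv ?_
  rw [pruferFst, pruferSnd, amplitudeRate, wkbPerturbation, ← radialMomentum_sq hν hx.le]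
  field_simp
  ring

variable (H : HankelAsymptotics ν σ y z) (hσ : σ ≠ 0)
include H hσ

theorem pruferNormSq_pos (hx : ν < x) : 0 < pruferNormSq ν y z x := by
  have hr := radialMomentum_pos hν hx
  by_cases hy : y x = 0
  · have hz : z x ≠ 0 := fun hz => h.not_both_zero H hσ (hν.trans hx) ⟨hy, hz⟩
    rw [pruferNormSq, pruferFst, pruferSnd, hy]
    simpa using sq_pos_of_ne_zero hz
  · have : pruferFst ν y x ≠ 0 := mul_ne_zero hr.ne' hy
    rw [pruferNormSq]
    positivity

theorem phaseDefectRate_nonneg (hx : ν < x) : 0 ≤ phaseDefectRate ν y z x :=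
  mul_nonneg (mul_wkbPerturbation_div_nonneg hν hx)
    (div_nonneg (sq_nonneg _) (h.pruferNormSq_pos hν H hσ hx).le)

theorem phaseDefectRate_le (hx : ν < x) :
    phaseDefectRate ν y z x ≤ radialMomentum ν x * wkbPerturbation ν x / x :=
  mul_le_of_le_one_right (mul_wkbPerturbation_div_nonneg hν hx)
    ((div_le_one (h.pruferNormSq_pos hν H hσ hx)).2 (le_add_of_nonneg_right (sq_nonneg _)))

theorem continuousOn_phaseDefectRate : ContinuousOn (phaseDefectRate ν y z) (Ioi ν) := by
  intro x hx
  have hr := radialMomentum_pos hν hx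
  have hr' := (continuous_radialMomentum ν).continuousAt (x := x)
  have hA := (h.hasDerivAt_pruferFst hν hx).continuousAt
  have hB := (h.hasDerivAt_pruferSnd hν hx).continuousAt
  have hq : ContinuousAt (wkbPerturbation ν) x :=
    ContinuousAt.div (by fun_prop) (by fun_prop) (by positivity)
  exact (((hr'.mul hq).div continuousAt_id (hν.trans hx).ne').mul ((hA.pow 2).div
    ((hA.pow 2).add (hB.pow 2)) (h.pruferNormSq_pos hν H hσ hx).ne')).continuousWithinAt

theorem integrableOn_phaseDefectRate (hx : ν < x) :
    IntegrableOn (phaseDefectRate ν y z) (Ioi x) := by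
  refine (integrableOn_mul_wkbPerturbation_div hν hx).mono'
    (((h.continuousOn_phaseDefectRate hν H hσ).mono
      (Ioi_subset_Ioi hx.le)).aestronglyMeasurable measurableSet_Ioi) ?_
  refine (ae_restrict_mem measurableSet_Ioi).mono fun t ht => ?_
  rw [norm_of_nonneg (h.phaseDefectRate_nonneg hν H hσ (hx.trans ht))]
  exact h.phaseDefectRate_le hν H hσ (hx.trans ht)

theorem phaseDefect_nonneg (hx : ν < x) : 0 ≤ phaseDefect ν y z x :=
  setIntegral_nonneg measurableSet_Ioi fun _ ht => h.phaseDefectRate_nonneg hν H hσ (hx.trans ht)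

theorem phaseDefect_le (hx : ν < x) : phaseDefect ν y z x ≤ debyeErrorBound ν x := by
  rw [← integral_mul_wkbPerturbation_div hν hx]
  exact setIntegral_mono_on (h.integrableOn_phaseDefectRate hν H hσ hx)
    (integrableOn_mul_wkbPerturbation_div hν hx) measurableSet_Ioi
    fun _ ht => h.phaseDefectRate_le hν H hσ (hx.trans ht)

theorem hasDerivAt_pruferPhase (hx : ν < x) : HasDerivAt (pruferPhase ν y z)
    (radialMomentum ν x / x + phaseDefectRate ν y z x) x :=
  (((hasDerivAt_debyePhase hν hx).add_const (π / 4)).fun_sub (hasDerivAt_integral_Ioi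
    (h.continuousOn_phaseDefectRate hν H hσ)
    (fun _ hb => h.integrableOn_phaseDefectRate hν H hσ hb) hx)).congr_deriv (sub_neg_eq_add _ _)

theorem strictMonoOn_pruferPhase : StrictMonoOn (pruferPhase ν y z) (Ioi ν) := by
  refine strictMonoOn_of_hasDerivWithinAt_pos (convex_Ioi ν)
    (fun x hx => (h.hasDerivAt_pruferPhase hν H hσ hx).continuousAt.continuousWithinAt)
    (f' := fun x => radialMomentum ν x / x + phaseDefectRate ν y z x) ?_ ?_ <;>
    rw [interior_Ioi] <;> intro x hx
  · exact (h.hasDerivAt_pruferPhase hν H hσ hx).hasDerivWithinAt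
  · exact add_pos_of_pos_of_nonneg (div_pos (radialMomentum_pos hν hx) (hν.trans hx))
      (h.phaseDefectRate_nonneg hν H hσ hx)

theorem tendsto_pruferPhase_sub_hankelPhase :
    Tendsto (fun x => pruferPhase ν y z x - hankelPhase ν x) atTop (𝓝 (π / 2)) := by
  have hdefect : Tendsto (phaseDefect ν y z) atTop (𝓝 0) :=
    squeeze_zero' ((eventually_gt_atTop ν).mono fun _ => h.phaseDefect_nonneg hν H hσ)
      ((eventually_gt_atTop ν).mono fun _ => h.phaseDefect_le hν H hσ)
      (tendsto_debyeErrorBound hν)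
  have hlim := ((tendsto_debyePhase_sub_hankelPhase hν).add_const (π / 4)).sub hdefect
  rw [show π / 4 + π / 4 - 0 = π / 2 by ring] at hlim
  refine hlim.congr fun x => ?_
  rw [pruferPhase]
  ring

theorem hasDerivAt_pruferResidual_sq_div (hx : ν < x) :
    HasDerivAt (fun x => pruferResidual ν y z x ^ 2 / pruferNormSq ν y z x) 0 x := by
  have hx0 := hν.trans hx
  have hM := h.pruferNormSq_pos hν H hσ hx
  have hA := h.hasDerivAt_pruferFst hν hx
  have hB := h.hasDerivAt_pruferSnd hν hx
  have hΦ := h.hasDerivAt_pruferPhase hν H hσ hx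
  have hN := (hA.fun_mul hΦ.cos).fun_sub (hB.fun_mul hΦ.sin)
  refine ((hN.fun_pow 2).fun_div ((hA.fun_pow 2).fun_add (hB.fun_pow 2)) hM.ne').congr_deriv ?_
  rw [phaseDefectRate]
  rw [pruferNormSq] at hM ⊢
  generalize pruferFst ν y x = A at *
  generalize pruferSnd ν y z x = B at *
  push_cast
  field_simp
  ring

end BesselSystem

namespace HankelAsymptotics

variable {ν σ : ℝ} {y z : ℝ → ℝ} (H : HankelAsymptotics ν σ y z) (hν : 0 < ν)
include H hν

theorem tendsto_pruferFst : Tendsto (fun x => pruferFst ν y x / √x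
    - σ * cos (hankelPhase ν x)) atTop (𝓝 0) := by
  have hr := tendsto_radialMomentum_div_self hν
  have hlim := (hr.mul H.tendsto_fst).add
    ((tendsto_mul_cos_zero (tendsto_sub_nhds_zero_iff.2 hr) (hankelPhase ν)).const_mul σ)
  rw [mul_zero, mul_zero, add_zero] at hlim
  refine hlim.congr fun x => ?_
  have hdiv : pruferFst ν y x / √x = radialMomentum ν x / x * (√x * y x) := by
    rw [pruferFst, div_eq_mul_inv, ← sqrt_div_self]
    ring
  rw [hdiv]
  ring

theorem tendsto_pruferSnd : Tendsto (fun x => pruferSnd ν y z x / √x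
    + σ * sin (hankelPhase ν x)) atTop (𝓝 0) := by
  have hκ := tendsto_amplitudeRate_div_self hν
  have hlim := (H.tendsto_snd.add (hκ.mul H.tendsto_fst)).add
    ((tendsto_mul_cos_zero hκ (hankelPhase ν)).const_mul σ)
  simp only [mul_zero, add_zero] at hlim
  refine hlim.congr fun x => ?_
  have hdiv : pruferSnd ν y z x / √x = z x / √x + amplitudeRate ν x / x * (√x * y x) := by
    rw [pruferSnd, add_div, mul_div_assoc, div_eq_mul_inv (y x), ← sqrt_div_self]
    ring
  rw [hdiv]
  ring

theorem tendsto_pruferNormSq_div :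
    Tendsto (fun x => pruferNormSq ν y z x / x) atTop (𝓝 (σ ^ 2)) := by
  have ha := H.tendsto_pruferFst hν
  have hb := H.tendsto_pruferSnd hν
  have hlim := (((ha.pow 2).add (hb.pow 2)).add (((tendsto_mul_cos_zero ha (hankelPhase ν)).sub
    (tendsto_mul_sin_zero hb (hankelPhase ν))).const_mul (2 * σ))).add_const (σ ^ 2)
  simp only [sub_zero, mul_zero, add_zero, zero_add, ne_eq, OfNat.ofNat_ne_zero, not_false_eq_true,
    zero_pow] at hlim
  refine hlim.congr' ?_
  filter_upwards [eventually_gt_atTop 0] with x hx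
  have hnorm : pruferNormSq ν y z x / x
      = (pruferFst ν y x / √x) ^ 2 + (pruferSnd ν y z x / √x) ^ 2 := by
    rw [div_pow, div_pow, sq_sqrt hx.le, ← add_div, pruferNormSq]
  rw [hnorm]
  linear_combination -σ ^ 2 * sin_sq_add_cos_sq (hankelPhase ν x)

end HankelAsymptotics

namespace BesselSystem

variable {ν σ x : ℝ} {y z : ℝ → ℝ} (h : BesselSystem ν y z) (hν : 0 < ν)
  (H : HankelAsymptotics ν σ y z) (hσ : σ ≠ 0)
include h hν H hσ

theorem tendsto_pruferResidual :
    Tendsto (fun x => pruferResidual ν y z x / √x) atTop (𝓝 0) := by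
  have hgap := (continuous_cos.tendsto _).comp (h.tendsto_pruferPhase_sub_hankelPhase hν H hσ)
  have hlim := (((tendsto_mul_cos_zero (H.tendsto_pruferFst hν) (pruferPhase ν y z)).sub
    (tendsto_mul_sin_zero (H.tendsto_pruferSnd hν) (pruferPhase ν y z)))).add (hgap.const_mul σ)
  simp only [cos_pi_div_two, mul_zero, sub_zero, add_zero] at hlim
  refine hlim.congr fun x => ?_
  rw [Function.comp_apply, cos_sub, pruferResidual]
  ring

-- The squared ratio of residual to amplitude is constant, and it vanishes at infinity.
theorem pruferResidual_eq_zero (hx : ν < x) : pruferResidual ν y z x = 0 := by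
  have hderiv {t : ℝ} (ht : ν < t) := h.hasDerivAt_pruferResidual_sq_div hν H hσ ht
  have hconst {t : ℝ} (ht : ν < t) :
      pruferResidual ν y z t ^ 2 / pruferNormSq ν y z t
        = pruferResidual ν y z x ^ 2 / pruferNormSq ν y z x :=
    isOpen_Ioi.is_const_of_deriv_eq_zero isPreconnected_Ioi
      (fun s hs => (hderiv hs).differentiableAt.differentiableWithinAt)
      (fun s hs => (hderiv hs).deriv) ht hx
  have hlim := ((h.tendsto_pruferResidual hν H hσ).pow 2).div (H.tendsto_pruferNormSq_div hν)
    (pow_ne_zero 2 hσ)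
  rw [zero_pow two_ne_zero, zero_div] at hlim
  have hzero : pruferResidual ν y z x ^ 2 / pruferNormSq ν y z x = 0 := by
    refine tendsto_nhds_unique (tendsto_const_nhds.congr' ?_) hlim
    filter_upwards [eventually_gt_atTop ν] with t ht
    have ht0 : 0 < t := hν.trans ht
    rw [← hconst ht, Pi.div_apply, div_pow, sq_sqrt ht0.le, div_div_div_cancel_right₀ ht0.ne']
  exact pow_eq_zero_iff two_ne_zero |>.1
    ((div_eq_zero_iff.1 hzero).resolve_right (h.pruferNormSq_pos hν H hσ hx).ne')

theorem eq_zero_iff_sin_pruferPhase_eq_zero (hx : ν < x) :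
    y x = 0 ↔ sin (pruferPhase ν y z x) = 0 := by
  have hres := h.pruferResidual_eq_zero hν H hσ hx
  rw [pruferResidual, sub_eq_zero] at hres
  have hr := radialMomentum_pos hν hx
  constructor
  · intro hy
    have hA : pruferFst ν y x = 0 := by rw [pruferFst, hy, mul_zero]
    have hM := h.pruferNormSq_pos hν H hσ hx
    rw [pruferNormSq, hA, zero_pow two_ne_zero, zero_add] at hM
    rw [hA, zero_mul] at hres
    exact (mul_eq_zero.1 hres.symm).resolve_left (pow_ne_zero_iff two_ne_zero |>.1 hM.ne')
  · intro hsin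
    have hcos : cos (pruferPhase ν y z x) ≠ 0 := fun hcos => by
      simpa [hsin, hcos] using sin_sq_add_cos_sq (pruferPhase ν y z x)
    rw [hsin, mul_zero] at hres
    exact (mul_eq_zero.1 ((mul_eq_zero.1 hres).resolve_right hcos)).resolve_left hr.ne'

end BesselSystem

/-! ### Counting zeros -/

theorem image_mul_pi_Ico_one {a : ℝ} (ha : a ∈ Ioo 0 π) (n : ℕ) :
    (fun i : ℕ => i * π) '' Ico 1 n = {t ∈ Ioo a (n * π) | sin t = 0} := by
  ext t
  constructor
  · rintro ⟨i, hi, rfl⟩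
    have hi1 : (1 : ℝ) ≤ i := by exact_mod_cast hi.1
    have hin : (i : ℝ) < n := by exact_mod_cast hi.2
    exact ⟨⟨ha.2.trans_le (le_mul_of_one_le_left pi_pos.le hi1),
      mul_lt_mul_of_pos_right hin pi_pos⟩, sin_nat_mul_pi i⟩
  · rintro ⟨⟨hat, htn⟩, hsin⟩
    obtain ⟨m, rfl⟩ := sin_eq_zero_iff.1 hsin
    have hm : (0 : ℝ) < m := pos_of_mul_pos_left (ha.1.trans hat) pi_pos.le
    have hmn : (m : ℝ) < n := lt_of_mul_lt_mul_right htn pi_pos.le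
    lift m to ℕ using (by exact_mod_cast hm.le)
    exact ⟨m, ⟨by exact_mod_cast hm, by exact_mod_cast hmn⟩, by simp⟩

theorem ncard_sin_eq_zero_of_strictMonoOn {φ : ℝ → ℝ} {a b : ℝ} {n : ℕ} (hab : a ≤ b)
    (hcont : ContinuousOn φ (Icc a b)) (hmono : StrictMonoOn φ (Icc a b)) (ha : φ a ∈ Ioo 0 π)
    (hb : φ b = n * π) : {x ∈ Ioo a b | sin (φ x) = 0}.ncard = n - 1 := by
  have hsub : Ioo a b ⊆ Icc a b := Ioo_subset_Icc_self
  have himage : φ '' {x ∈ Ioo a b | sin (φ x) = 0} = (fun i : ℕ => i * π) '' Ico 1 n := by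
    rw [image_mul_pi_Ico_one ha, ← hb]
    ext t
    constructor
    · rintro ⟨x, ⟨hx, hsin⟩, rfl⟩
      exact ⟨⟨hmono (left_mem_Icc.2 hab) (hsub hx) hx.1,
        hmono (hsub hx) (right_mem_Icc.2 hab) hx.2⟩, hsin⟩
    · rintro ⟨ht, hsin⟩
      obtain ⟨x, hx, rfl⟩ := intermediate_value_Ioo hab hcont ht
      exact ⟨x, ⟨hx, hsin⟩, rfl⟩
  have hinj : InjOn φ {x ∈ Ioo a b | sin (φ x) = 0} := hmono.injOn.mono fun _ hx => hsub hx.1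
  rw [← hinj.ncard_image, himage, ncard_image_of_injective _ fun i m him =>
    Nat.cast_injective (mul_right_cancel₀ pi_pos.ne' him)]
  simp

/-- Where the WKB regime begins: the point with `(x² - ν²)^{3/2} = ν²`, up to which the solution
bounded at the origin has no zeros. -/
noncomputable def wkbCutoff (ν : ℝ) : ℝ := √(ν ^ 2 + (ν ^ (2 / 3 : ℝ)) ^ 2)

section Cutoff

variable {ν : ℝ} (hν : 0 < ν)
include hν

theorem lt_wkbCutoff : ν < wkbCutoff ν :=
  lt_sqrt_of_sq_lt (lt_add_of_pos_right _ (by positivity))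

theorem radialMomentum_wkbCutoff_pow_three : radialMomentum ν (wkbCutoff ν) ^ 3 = ν ^ 2 := by
  rw [radialMomentum, wkbCutoff, sq_sqrt (by positivity), add_sub_cancel_left,
    sqrt_sq (by positivity), ← rpow_natCast, ← rpow_mul hν.le, ← rpow_natCast]
  norm_num

end Cutoff

theorem debyeErrorBound_wkbCutoff_le {ν : ℝ} (hν : 1 ≤ ν) :
    debyeErrorBound ν (wkbCutoff ν) ≤ 2 / 3 := by
  have hν0 : 0 < ν := one_pos.trans_le hν
  have hr := radialMomentum_pos hν0 (lt_wkbCutoff hν0)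
  have hr3 := radialMomentum_wkbCutoff_pow_three hν0
  have hr1 : 1 ≤ radialMomentum ν (wkbCutoff ν) :=
    (one_le_pow_iff_of_nonneg hr.le three_ne_zero).1 (hr3 ▸ one_le_pow₀ hν)
  calc debyeErrorBound ν (wkbCutoff ν)
      = 1 / (4 * radialMomentum ν (wkbCutoff ν)) + 5 / 12 := by
        rw [debyeErrorBound, hr3]
        field_simp
    _ ≤ 1 / (4 * 1) + 5 / 12 := by gcongr
    _ = 2 / 3 := by norm_num

theorem debyePhase_wkbCutoff_le {ν : ℝ} (hν : 0 < ν) : debyePhase ν (wkbCutoff ν) ≤ 1 / 3 := by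
  refine (debyePhase_le hν (lt_wkbCutoff hν).le).trans_eq ?_
  rw [radialMomentum_wkbCutoff_pow_three hν]
  field_simp

namespace BesselSystem

variable {ν σ x C : ℝ} {y z : ℝ → ℝ} (h : BesselSystem ν y z)
  (H : HankelAsymptotics ν σ y z) (hσ : σ ≠ 0)
include h H hσ

theorem pruferPhase_wkbCutoff_mem_Ioo (hν : 1 ≤ ν) :
    pruferPhase ν y z (wkbCutoff ν) ∈ Ioo 0 π := by
  have hν0 : 0 < ν := one_pos.trans_le hν
  have hlt := lt_wkbCutoff hν0
  have hphase_pos : 0 < debyePhase ν (wkbCutoff ν) := by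
    rw [← debyePhase_self hν0]
    exact strictMonoOn_debyePhase hν0 self_mem_Ici hlt.le hlt
  have hphase_le := debyePhase_wkbCutoff_le hν0
  have hdefect_nonneg := h.phaseDefect_nonneg hν0 H hσ hlt
  have hdefect_le := (h.phaseDefect_le hν0 H hσ hlt).trans (debyeErrorBound_wkbCutoff_le hν)
  have hpi := pi_gt_three
  rw [pruferPhase]
  constructor <;> linarith

variable (hC : ∀ {x}, 0 < x → |y x| ≤ C)
include hC

theorem wkbCutoff_lt_of_eq_zero (hν : 0 < ν) (hx : 0 < x) (hy : y x = 0) : wkbCutoff ν < x := by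
  by_contra! hle
  refine h.ne_zero_of_cube_lt hC H hσ hν hx ?_ hy
  calc (x ^ 2 - ν ^ 2) ^ 3 ≤ (wkbCutoff ν ^ 2 - ν ^ 2) ^ 3 :=
        (Odd.strictMono_pow (by decide)).monotone (by gcongr)
    _ = ν ^ 4 := by
        rw [← radialMomentum_sq hν (lt_wkbCutoff hν).le, pow_right_comm,
          radialMomentum_wkbCutoff_pow_three hν]
        ring
    _ < 4 * ν ^ 4 := lt_mul_left (by positivity) (by norm_num)

theorem setOf_zeros_eq_setOf_sin_pruferPhase (hν : 0 < ν) (j : ℝ) :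
    {x | 0 < x ∧ x < j ∧ y x = 0}
      = {x ∈ Ioo (wkbCutoff ν) j | sin (pruferPhase ν y z x) = 0} := by
  have hlt := lt_wkbCutoff hν
  ext x
  constructor
  · rintro ⟨hx, hxj, hy⟩
    have hcut := h.wkbCutoff_lt_of_eq_zero H hσ hC hν hx hy
    exact ⟨⟨hcut, hxj⟩, (h.eq_zero_iff_sin_pruferPhase_eq_zero hν H hσ (hlt.trans hcut)).1 hy⟩
  · rintro ⟨⟨hx, hxj⟩, hsin⟩
    have hxν := hlt.trans hx
    exact ⟨hν.trans hxν, hxj, (h.eq_zero_iff_sin_pruferPhase_eq_zero hν H hσ hxν).2 hsin⟩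

theorem debyePhase_eq_of_ncard_zeros {j : ℝ} {k : ℕ} (hν : 1 ≤ ν) (hk : 1 ≤ k) (hj : 0 < j)
    (hyj : y j = 0) (hcard : {x | 0 < x ∧ x < j ∧ y x = 0}.ncard = k - 1) :
    debyePhase ν j = (k - 1 / 4) * π + phaseDefect ν y z j := by
  have hν0 : 0 < ν := one_pos.trans_le hν
  have hlt := lt_wkbCutoff hν0
  have hjcut : wkbCutoff ν < j := h.wkbCutoff_lt_of_eq_zero H hσ hC hν0 hj hyj
  have hsub : Icc (wkbCutoff ν) j ⊆ Ioi ν := fun x hx => hlt.trans_le hx.1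
  have hmono := (h.strictMonoOn_pruferPhase hν0 H hσ).mono hsub
  have hcont : ContinuousOn (pruferPhase ν y z) (Icc (wkbCutoff ν) j) := fun x hx =>
    (h.hasDerivAt_pruferPhase hν0 H hσ (hsub hx)).continuousAt.continuousWithinAt
  have hstart := h.pruferPhase_wkbCutoff_mem_Ioo H hσ hν
  obtain ⟨m, hm⟩ := sin_eq_zero_iff.1
    ((h.eq_zero_iff_sin_pruferPhase_eq_zero hν0 H hσ (hlt.trans hjcut)).1 hyj)
  have hm0 : (0 : ℝ) < m := by
    refine pos_of_mul_pos_left ?_ pi_pos.le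
    rw [hm]
    exact hstart.1.trans (hmono (left_mem_Icc.2 hjcut.le) (right_mem_Icc.2 hjcut.le) hjcut)
  lift m to ℕ using (by exact_mod_cast hm0.le)
  rw [Int.cast_natCast] at hm hm0
  rw [h.setOf_zeros_eq_setOf_sin_pruferPhase H hσ hC hν0,
    ncard_sin_eq_zero_of_strictMonoOn hjcut.le hcont hmono hstart hm.symm] at hcard
  have hmk : m = k := by
    have : 0 < m := by exact_mod_cast hm0
    omega
  rw [hmk, pruferPhase] at hm
  linarith

end BesselSystem

theorem IsKthZero.order_lt {ν j : ℝ} {k : ℕ} (hj : IsKthZero ν k j) (hν : 0 < ν) : ν < j := by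
  obtain ⟨σ, hσ, H⟩ := exists_hankelAsymptotics_besselJ hν
  exact (lt_wkbCutoff hν).trans ((besselSystem_besselJ hν).wkbCutoff_lt_of_eq_zero H hσ
    (abs_besselJ_le hν) hν hj.1 hj.2.1)

theorem IsKthZero.debyePhase_sub_mem_Icc {ν j : ℝ} {k : ℕ} (hj : IsKthZero ν k j) (hν : 1 ≤ ν)
    (hk : 1 ≤ k) : debyePhase ν j - (k - 1 / 4) * π ∈ Icc 0 (debyeErrorBound ν j) := by
  have hν0 : 0 < ν := one_pos.trans_le hν
  have h := besselSystem_besselJ hν0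
  obtain ⟨σ, hσ, H⟩ := exists_hankelAsymptotics_besselJ hν0
  rw [h.debyePhase_eq_of_ncard_zeros H hσ (abs_besselJ_le hν0) hν hk hj.1 hj.2.1 hj.2.2,
    add_sub_cancel_left]
  exact ⟨h.phaseDefect_nonneg hν0 H hσ (hj.order_lt hν0),
    h.phaseDefect_le hν0 H hσ (hj.order_lt hν0)⟩

/-! ### Inverting the Debye phase -/

section Inversion

variable {ν x j L : ℝ} (hν : 0 < ν)
include hν

theorem antitoneOn_debyeErrorBound : AntitoneOn (debyeErrorBound ν) (Ioi ν) := by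
  intro x hx j _ hxj
  have hr := radialMomentum_pos hν hx
  have hle := radialMomentum_le_radialMomentum hν (mem_Ioi.1 hx).le hxj
  rw [debyeErrorBound, debyeErrorBound]
  gcongr

theorem debyeErrorBound_le_of_le_mul (hx : ν < x) (hxL : x ≤ L * ν) :
    debyeErrorBound ν x ≤ (3 * L ^ 2 + 2) / 12 * ν ^ 2 / radialMomentum ν x ^ 3 := by
  have hr := radialMomentum_pos hν hx
  have hx0 : 0 < x := hν.trans hx
  calc debyeErrorBound ν x
      = (3 * radialMomentum ν x ^ 2 + 5 * ν ^ 2) / 12 / radialMomentum ν x ^ 3 := by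
        rw [debyeErrorBound]
        field_simp
        ring
    _ = (3 * x ^ 2 + 2 * ν ^ 2) / 12 / radialMomentum ν x ^ 3 := by
        rw [radialMomentum_sq hν hx.le]
        ring
    _ ≤ (3 * (L * ν) ^ 2 + 2 * ν ^ 2) / 12 / radialMomentum ν x ^ 3 := by gcongr
    _ = (3 * L ^ 2 + 2) / 12 * ν ^ 2 / radialMomentum ν x ^ 3 := by ring

theorem mul_sub_le_debyePhase_sub (hx : ν < x) (hxj : x ≤ j) :
    radialMomentum ν x / j * (j - x) ≤ debyePhase ν j - debyePhase ν x := by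
  have hmono : MonotoneOn (fun t => debyePhase ν t - radialMomentum ν x / j * t) (Icc x j) := by
    refine monotoneOn_of_hasDerivAt_nonneg (convex_Icc x j) (fun t ht =>
      (hasDerivAt_debyePhase hν (hx.trans_le ht.1)).fun_sub ((hasDerivAt_id' t).const_mul _))
      fun t ht => ?_
    have ht0 : 0 < t := hν.trans (hx.trans_le ht.1)
    rw [mul_one, sub_nonneg]
    exact div_le_div₀ (sqrt_nonneg _) (radialMomentum_le_radialMomentum hν hx.le ht.1) ht0 ht.2
  have := hmono (left_mem_Icc.2 hxj) (right_mem_Icc.2 hxj) hxj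
  linarith

theorem sub_le_of_debyePhase_sub_le (hx : ν < x) (hxj : x ≤ j) (hjL : j ≤ L * ν)
    (hphase : debyePhase ν j - debyePhase ν x ≤ debyeErrorBound ν j) :
    j - x ≤ L * (3 * L ^ 2 + 2) / 12 * ν ^ 3 / radialMomentum ν x ^ 4 := by
  have hr := radialMomentum_pos hν hx
  have hj : 0 < j := hν.trans (hx.trans_le hxj)
  have hslope : radialMomentum ν x / j * (j - x)
      ≤ (3 * L ^ 2 + 2) / 12 * ν ^ 2 / radialMomentum ν x ^ 3 :=
    calc radialMomentum ν x / j * (j - x)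
        ≤ debyePhase ν j - debyePhase ν x := mul_sub_le_debyePhase_sub hν hx hxj
      _ ≤ debyeErrorBound ν j := hphase
      _ ≤ debyeErrorBound ν x := antitoneOn_debyeErrorBound hν hx (hx.trans_le hxj) hxj
      _ ≤ _ := debyeErrorBound_le_of_le_mul hν hx (hxj.trans hjL)
  calc j - x = j / radialMomentum ν x * (radialMomentum ν x / j * (j - x)) := by field_simp
    _ ≤ L * ν / radialMomentum ν x *
        ((3 * L ^ 2 + 2) / 12 * ν ^ 2 / radialMomentum ν x ^ 3) := by
      gcongr
      exact div_nonneg (hj.le.trans hjL) hr.le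
    _ = L * (3 * L ^ 2 + 2) / 12 * ν ^ 3 / radialMomentum ν x ^ 4 := by ring

theorem mul_sq_le_radialMomentum_pow_three {κ : ℝ} (hκ : 1 ≤ κ) (hx : ν ≤ x)
    (hphase : debyePhase ν x = (κ - 1 / 4) * π) : κ * ν ^ 2 ≤ radialMomentum ν x ^ 3 := by
  have hpi := pi_gt_three
  have hκ_le : κ ≤ 3 * debyePhase ν x := by
    rw [hphase]
    nlinarith
  calc κ * ν ^ 2 ≤ 3 * debyePhase ν x * ν ^ 2 := by gcongr
    _ ≤ 3 * (radialMomentum ν x ^ 3 / (3 * ν ^ 2)) * ν ^ 2 := by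
      gcongr
      exact debyePhase_le hν hx
    _ = radialMomentum ν x ^ 3 := by field_simp

theorem pow_three_div_pow_four_le {κ r : ℝ} (hκ : 0 < κ) (hr : 0 < r)
    (hle : κ * ν ^ 2 ≤ r ^ 3) :
    ν ^ 3 / r ^ 4 ≤ ν ^ (1 / 3 : ℝ) * κ ^ (-4 / 3 : ℝ) := by
  have hr4 : (κ * ν ^ 2) ^ (4 / 3 : ℝ) ≤ r ^ 4 :=
    calc (κ * ν ^ 2) ^ (4 / 3 : ℝ) ≤ (r ^ 3) ^ (4 / 3 : ℝ) := by gcongr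
      _ = r ^ 4 := by
        rw [← rpow_natCast_mul hr.le, ← rpow_natCast]
        norm_num
  calc ν ^ 3 / r ^ 4 ≤ ν ^ 3 / (κ * ν ^ 2) ^ (4 / 3 : ℝ) := by gcongr
    _ = ν ^ (3 - 2 * (4 / 3) : ℝ) * κ ^ (-(4 / 3) : ℝ) := by
      rw [mul_rpow hκ.le (by positivity), ← rpow_natCast_mul hν.le, rpow_neg hκ.le, rpow_sub hν]
      norm_num
      field_simp
    _ = ν ^ (1 / 3 : ℝ) * κ ^ (-4 / 3 : ℝ) := by norm_num

end Inversion

theorem zero_minkowski_approx_near_general {ν j x L : ℝ} {k : ℕ} (hν : 1 ≤ ν) (hk : 1 ≤ k)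
    (hj : IsKthZero ν k j) (hjL : j ≤ L * ν) (hx : ν ≤ x) (hg : x * gfun (ν / x) = k - 1 / 4) :
    |j - x| ≤ L * (3 * L ^ 2 + 2) / 12 * ν ^ (1 / 3 : ℝ) * k ^ (-4 / 3 : ℝ) := by
  have hν0 : 0 < ν := one_pos.trans_le hν
  have hk1 : (1 : ℝ) ≤ k := by exact_mod_cast hk
  have hνj : ν < j := hj.order_lt hν0
  obtain ⟨hphase_ge, hphase_le⟩ := hj.debyePhase_sub_mem_Icc hν hk
  have hphase : debyePhase ν x = (k - 1 / 4) * π := by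
    rw [← mul_gfun_mul_pi_eq_debyePhase hν0 hx, hg]
  rw [← hphase] at hphase_ge hphase_le
  have hcube := mul_sq_le_radialMomentum_pow_three hν0 hk1 hx hphase
  have hr : 0 < radialMomentum ν x :=
    (Odd.pow_pos_iff (by decide)).1 ((by positivity : 0 < k * ν ^ 2).trans_le hcube)
  have hxν : ν < x := hx.lt_of_ne fun hxν => by simp [← hxν, radialMomentum_self] at hr
  have hxj : x ≤ j :=
    ((strictMonoOn_debyePhase hν0).le_iff_le hx hνj.le).1 (sub_nonneg.1 hphase_ge)
  have hL : 0 < L := pos_of_mul_pos_left (hν0.trans_le (hνj.le.trans hjL)) hν0.le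
  calc |j - x| = j - x := abs_of_nonneg (sub_nonneg.2 hxj)
    _ ≤ L * (3 * L ^ 2 + 2) / 12 * (ν ^ 3 / radialMomentum ν x ^ 4) := by
      rw [← mul_div_assoc]
      exact sub_le_of_debyePhase_sub_le hν0 hxν hxj hjL hphase_le
    _ ≤ L * (3 * L ^ 2 + 2) / 12 * (ν ^ (1 / 3 : ℝ) * k ^ (-4 / 3 : ℝ)) := by
      gcongr
      exact pow_three_div_pow_four_le hν0 (by positivity) hr hcube
    _ = L * (3 * L ^ 2 + 2) / 12 * ν ^ (1 / 3 : ℝ) * k ^ (-4 / 3 : ℝ) := by ring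

/-- approximation `j_{ν,k} = F(ν, k - 1/4) + O(ν^{1/3} k^{-4/3})` in the regime
`j < (1+c)ν`, for large `ν`. -/
theorem zero_minkowski_approx_near :
    ∃ c N C : ℝ, 0 < c ∧ c < 1 ∧ 0 < N ∧ 0 < C ∧ ∀ ν : ℝ, N < ν → ∀ k : ℕ, 1 ≤ k →
      ∀ j : ℝ, IsKthZero ν k j → j < (1 + c) * ν →
      ∀ xstar : ℝ, ν ≤ xstar → xstar * gfun (ν / xstar) = (k : ℝ) - 1 / 4 →
      |j - xstar| ≤ C * ν ^ ((1 : ℝ) / 3) * (k : ℝ) ^ (-(4 : ℝ) / 3) := by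
  refine ⟨1 / 2, 1, (1 + 1 / 2) * (3 * (1 + 1 / 2) ^ 2 + 2) / 12, by norm_num, by norm_num,
    one_pos, by norm_num, ?_⟩
  intro ν hν k hk j hj hjL xstar hx hg
  exact zero_minkowski_approx_near_general hν.le hk hj hjL.le hx hg
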